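/- There exist constants C₁ > 0 and C₂ > 0 such that for every finite collection Γ₁ of lines in ℝ³ (i.e., 1-dimensional affine subspaces of ℝ³), every finite collection Γ₂ of points in ℝ³, and every integer D ≥ 1, there exists a non-zero polynomial p ∈ ℝ[x,y,z] of total degree at most D such that every connected component of ℝ³ \ Z(p) intersects at most 2·C₁·|Γ₁|/D² of the lines in Γ₁ and contains at most 2·C₂·|Γ₂|/D³ of the points of Γ₂. -/

import Mathlib

/-!
For sets `S i` in `ℝⁿ` and polynomials `q j`, `j ∈ J`, count for each sign vector
`w : J → {±1}` the sets `S i` that meet the cell where every `q j` has sign `w j`. All cells receive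
the same (smoothed) count as soon as the `2 ^ |J| - 1` nontrivial Fourier coefficients of this
function of `w` vanish. Changing the sign of `q j` multiplies the coefficient at `v ⊆ J` by `-1` if
`j ∈ v`, so the coefficients form an equivariant map for the action of `{±1} ^ J`. If `q j` ranges
over a sphere of dimension `2 ^ j`, the number of `v` with maximum `j`, such a map has a zero.
These polynomials may have degree `O(2 ^ (j / n))`, so `n * t` of them have a product of degree
`O(2 ^ t)` and `2 ^ (n * t)` cells. A line meets at most `deg + 1` of the cells and a point at most
one, which bounds the common count. The polynomials for lines and for points are multiplied.

The Borsuk–Ulam type statement is proved on a cubical subdivision of the product of spheres. For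
labels `σ` of the cells, replacing each cell by those of its facets that are labelled differently is
the commutator of the mod-2 boundary operator with multiplication by `σ`. Cutting the fundamental
class along all the labels in turn yields a 0-cycle whose class does not depend on the labels, given
how they transform under `{±1} ^ J`. For labels given by the signs of coordinates this 0-cycle is a
single orbit, so for any labels some cell sees a change of each of them. Apply this to the signs of
the components of the map on ever finer subdivisions.
-/

namespace PolynomialPartitioning

section Exchange

variable {R M : Type*} [CommRing R] [AddCommGroup M] [Module R M]
  {b d d' : Module.End R M} {S : Submodule R M} {φ φ' : M}

theorem boundary_lie_apply_eq_zero (hb : b * b = 0) (hφ : b φ = 0) : b (⁅b, d⁆ φ) = 0 := by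
  have hbb : b (b (d φ)) = 0 := congr($hb (d φ))
  simp [Ring.lie_def, hφ, hbb]

theorem lie_sub_lie_mem_map_boundary (hb : b * b = 0) (hd : ∀ ψ ∈ S, ⁅b, d⁆ ψ ∈ S)
    (hdd' : ∀ ψ ∈ S, (d - d') ψ ∈ S) (hφ' : φ' ∈ S) (hbφ' : b φ' = 0)
    (hφ : φ - φ' ∈ S.map b) : ⁅b, d⁆ φ - ⁅b, d'⁆ φ' ∈ S.map b := by
  obtain ⟨ψ, hψ, hbψ⟩ := hφ
  refine ⟨(d - d') φ' - ⁅b, d⁆ ψ, S.sub_mem (hdd' _ hφ') (hd _ hψ), ?_⟩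
  have hbb (v : M) : b (b v) = 0 := congr($hb v)
  obtain rfl : φ = b ψ + φ' := by rw [hbψ, sub_add_cancel]
  simp only [Ring.lie_def, LinearMap.sub_apply, Module.End.mul_apply, map_add, map_sub, map_zero,
    hbb, hbφ']
  abel

end Exchange

section ParityComplex

open Finset

variable {X G Q : Type*}

/-- The isomorphism of the group of signs with the additive group of `ZMod 2`. -/
def signBit (u : ℤˣ) : ZMod 2 := if u = 1 then 0 else 1

/-- The mod-2 chains that are constant on the orbits of `G`. -/
def invariantChains (G X : Type*) [SMul G X] : Submodule (ZMod 2) (X → ZMod 2) where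
  carrier := {φ | ∀ (g : G) x, φ (g • x) = φ x}
  add_mem' hφ hψ g x := congr($(hφ g x) + $(hψ g x))
  zero_mem' _ _ := rfl
  smul_mem' c _ hφ g x := congr(c • $(hφ g x))

theorem mulLeft_signBit_sub_mem_invariantChains [SMul G X] {χ : G → ℤˣ} {σ σ' : X → ℤˣ}
    {φ : X → ZMod 2} (hσ : ∀ (g : G) x, σ (g • x) = χ g * σ x)
    (hσ' : ∀ (g : G) x, σ' (g • x) = χ g * σ' x) (hφ : φ ∈ invariantChains G X) :
    (LinearMap.mulLeft (ZMod 2) (fun x => signBit (σ x)) -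
      LinearMap.mulLeft (ZMod 2) fun x => signBit (σ' x)) φ ∈ invariantChains G X := by
  have signBit_mul_sub : ∀ c u u', signBit (c * u) - signBit (c * u') = signBit u - signBit u' := by
    decide
  intro g x
  simp [hσ, hσ', hφ g x, ← sub_mul, signBit_mul_sub]

variable [Fintype X]

/-- The mod-2 boundary operator of a facet relation, where `r x y` says that `x` is a facet
of `y`. -/
def boundary (r : X → X → Prop) [DecidableRel r] : Module.End (ZMod 2) (X → ZMod 2) :=
  LinearMap.pi fun x => ∑ y with r x y, LinearMap.proj y

/-- The commutator of the boundary operator with multiplication by the labels `σ`: it replaces a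
cell by those of its facets that carry a different label. -/
def cut (r : X → X → Prop) [DecidableRel r] (σ : X → ℤˣ) : Module.End (ZMod 2) (X → ZMod 2) :=
  ⁅boundary r, LinearMap.mulLeft (ZMod 2) fun x => signBit (σ x)⁆

/-- The value of a chain on the vertices lying in the fundamental domain `ρ = 1`. -/
def vertexCount [One G] [DecidableEq G] (V : X → Prop) [DecidablePred V] (ρ : X → G)
    (φ : X → ZMod 2) : ZMod 2 :=
  ∑ x with V x ∧ ρ x = 1, φ x

/-- A cell complex with facet relation `r` and vertices `V`, acted on by `G`, for which mod-2 chains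
form a complex in the two bottom degrees as well: edges have an even number of ends. -/
structure IsParityComplex (G : Type*) [SMul G X] (r : X → X → Prop) [DecidableRel r]
    (V : X → Prop) [DecidablePred V] : Prop where
  even_card_between : ∀ x z, Even #{y | r x y ∧ r y z}
  even_card_ends : ∀ y, Even #{x | V x ∧ r x y}
  facet_smul_iff : ∀ (g : G) x y, r (g • x) (g • y) ↔ r x y
  vertex_smul_iff : ∀ (g : G) x, V (g • x) ↔ V x

variable {r : X → X → Prop} [DecidableRel r]

theorem boundary_apply (φ : X → ZMod 2) (x : X) : boundary r φ x = ∑ y with r x y, φ y := by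
  simp [boundary]

theorem cut_apply (σ : X → ℤˣ) (φ : X → ZMod 2) (x : X) :
    cut r σ φ x = ∑ y with r x y ∧ σ x ≠ σ y, φ y := by
  have signBit_sub : ∀ u u', signBit u - signBit u' = if u' ≠ u then 1 else 0 := by decide
  calc cut r σ φ x
      = ∑ y with r x y, (signBit (σ y) - signBit (σ x)) * φ y := by
        simp [cut, Ring.lie_def, boundary_apply, sub_mul, mul_sum]
    _ = ∑ y with r x y ∧ σ x ≠ σ y, φ y := by
        simp only [signBit_sub, ite_mul, one_mul, zero_mul, ← sum_filter, filter_filter]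

theorem exists_facet_of_cut_apply_ne_zero {σ : X → ℤˣ} {φ : X → ZMod 2} {x : X}
    (h : cut r σ φ x ≠ 0) : ∃ y, r x y ∧ σ x ≠ σ y ∧ φ y ≠ 0 := by
  rw [cut_apply] at h
  obtain ⟨y, hy, hφy⟩ := exists_ne_zero_of_sum_ne_zero h
  obtain ⟨hxy, hσ⟩ := (mem_filter.1 hy).2
  exact ⟨y, hxy, hσ, hφy⟩

theorem sum_boundary_eq_zero {P : X → Prop} [DecidablePred P] {φ : X → ZMod 2}
    (hP : ∀ y, Even #{x | P x ∧ r x y}) :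
    ∑ x with P x, ∑ y with r x y, φ y = 0 := by
  calc ∑ x with P x, ∑ y with r x y, φ y
      = ∑ y, ∑ x with P x ∧ r x y, φ y := by
        simp only [sum_filter, ite_and]
        rw [sum_comm]
        exact sum_congr rfl fun x _ => by split_ifs <;> simp
    _ = 0 := sum_eq_zero fun y _ => by
        rw [sum_const, nsmul_eq_mul, (ZMod.natCast_eq_zero_iff_even).2 (hP y), zero_mul]

theorem boundary_mul_boundary (h : ∀ x z, Even #{y | r x y ∧ r y z}) :
    boundary r * boundary r = 0 := by
  ext1 φ
  funext x
  simp only [Module.End.mul_apply, boundary_apply, LinearMap.zero_apply, Pi.zero_apply]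
  exact sum_boundary_eq_zero (h x)

theorem sum_fundamentalDomain_eq {A Y : Type*} [AddCommMonoid A] [Fintype Y] [Group G]
    [DecidableEq G] [MulAction G Y] {f : Y → A} {ρ ρ' : Y → G} (hf : ∀ (g : G) y, f (g • y) = f y)
    (hρ : ∀ (g : G) y, ρ (g • y) = g * ρ y) (hρ' : ∀ (g : G) y, ρ' (g • y) = g * ρ' y) :
    ∑ y with ρ y = 1, f y = ∑ y with ρ' y = 1, f y :=
  sum_nbij' (fun y => (ρ' y)⁻¹ • y) (fun y => (ρ y)⁻¹ • y) (by simp [hρ']) (by simp [hρ])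
    (by simp +contextual [hρ]) (by simp +contextual [hρ']) (by simp [hf])

section Action

variable [Group G] [MulAction G X] {V : X → Prop} [DecidablePred V] {χ : G → ℤˣ} {σ : X → ℤˣ}
  {φ : X → ZMod 2}

theorem cut_mem_invariantChains (hr : ∀ (g : G) x y, r (g • x) (g • y) ↔ r x y)
    (hσ : ∀ (g : G) x, σ (g • x) = χ g * σ x) (hφ : φ ∈ invariantChains G X) :
    cut r σ φ ∈ invariantChains G X := by
  intro g x
  simp only [cut_apply]
  exact (sum_equiv (MulAction.toPerm g) (fun y => by simp [hr, hσ]) fun y _ => (hφ g y).symm).symm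

variable [DecidableEq G] {ρ : X → G}

theorem vertexCount_boundary (h : IsParityComplex G r V) (hρ : ∀ (g : G) x, ρ (g • x) = g * ρ x)
    (hφ : φ ∈ invariantChains G X) : vertexCount V ρ (boundary r φ) = 0 := by
  calc vertexCount V ρ (boundary r φ)
      = ∑ p : X × X with ρ p.1 = 1, if V p.1 ∧ r p.1 p.2 then φ p.2 else 0 := by
        simp only [vertexCount, boundary_apply, sum_filter, Fintype.sum_prod_type, ite_and,
          sum_ite_irrel, sum_const_zero]
        exact sum_congr rfl fun x _ => by split_ifs <;> rfl
    _ = ∑ p : X × X with ρ p.2 = 1, if V p.1 ∧ r p.1 p.2 then φ p.2 else 0 :=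
        sum_fundamentalDomain_eq
          (fun g p => by simp [h.facet_smul_iff, h.vertex_smul_iff, hφ g p.2])
          (fun g p => hρ g p.1) fun g p => hρ g p.2
    _ = ∑ x with V x, ∑ y with r x y, if ρ y = 1 then φ y else 0 := by
        simp only [sum_filter, Fintype.sum_prod_type, ite_and]
        refine sum_congr rfl fun x _ => ?_
        split_ifs
        · exact sum_congr rfl fun y _ => by split_ifs <;> rfl
        · simp
    _ = 0 := sum_boundary_eq_zero h.even_card_ends

end Action

/-- The successive cuts of the chain `w` along the labels `σ q`, for `q` in the list `l`, starting
with its last element. -/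
def iteratedCut (r : X → X → Prop) [DecidableRel r] (σ : Q → X → ℤˣ) (w : X → ZMod 2)
    (l : List Q) : X → ZMod 2 :=
  l.foldr (fun q => cut r (σ q)) w

theorem exists_changes_of_iteratedCut_apply_ne_zero {σ : Q → X → ℤˣ} {w : X → ZMod 2}
    {l : List Q} {x : X} (hx : iteratedCut r σ w l x ≠ 0) {q : Q} (hq : q ∈ l) :
    ∃ y z, Relation.ReflTransGen r x y ∧ Relation.ReflTransGen r x z ∧ σ q y ≠ σ q z := by
  induction l generalizing x with
  | nil => simp at hq
  | cons q' l ih =>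
    obtain ⟨x', hxx', hσ, hx'⟩ := exists_facet_of_cut_apply_ne_zero hx
    rcases List.mem_cons.1 hq with rfl | hq
    · exact ⟨x, x', .refl, .single hxx', hσ⟩
    · obtain ⟨y, z, hy, hz, hyz⟩ := ih hx' hq
      exact ⟨y, z, hy.head hxx', hz.head hxx', hyz⟩

section Action

variable [Group G] [MulAction G X] {V : X → Prop} [DecidablePred V] {χ : Q → G → ℤˣ}
  {σ σ' : Q → X → ℤˣ} {w : X → ZMod 2}

theorem iteratedCut_sub_mem_map_boundary (h : IsParityComplex G r V)
    (hσ : ∀ q (g : G) x, σ q (g • x) = χ q g * σ q x)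
    (hσ' : ∀ q (g : G) x, σ' q (g • x) = χ q g * σ' q x)
    (hw : w ∈ invariantChains G X) (hbw : boundary r w = 0) (l : List Q) :
    iteratedCut r σ w l - iteratedCut r σ' w l ∈ (invariantChains G X).map (boundary r) := by
  have hb := boundary_mul_boundary h.even_card_between
  have cut_mem {χ : G → ℤˣ} {τ : X → ℤˣ} {ψ} (hτ : ∀ (g : G) x, τ (g • x) = χ g * τ x)
      (hψ : ψ ∈ invariantChains G X) := cut_mem_invariantChains h.facet_smul_iff hτ hψ
  have mem (l : List Q) : iteratedCut r σ' w l ∈ invariantChains G X := by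
    induction l with
    | nil => exact hw
    | cons q l ih => exact cut_mem (hσ' q) ih
  have cycle (l : List Q) : boundary r (iteratedCut r σ' w l) = 0 := by
    induction l with
    | nil => exact hbw
    | cons q l ih => exact boundary_lie_apply_eq_zero hb ih
  induction l with
  | nil => simp [iteratedCut]
  | cons q l ih =>
    exact lie_sub_lie_mem_map_boundary hb (fun ψ => cut_mem (hσ q))
      (fun ψ => mulLeft_signBit_sub_mem_invariantChains (hσ q) (hσ' q)) (mem l) (cycle l) ih

variable [DecidableEq G] {ρ : X → G}

theorem vertexCount_iteratedCut_eq (h : IsParityComplex G r V)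
    (hρ : ∀ (g : G) x, ρ (g • x) = g * ρ x) (hσ : ∀ q (g : G) x, σ q (g • x) = χ q g * σ q x)
    (hσ' : ∀ q (g : G) x, σ' q (g • x) = χ q g * σ' q x)
    (hw : w ∈ invariantChains G X) (hbw : boundary r w = 0) (l : List Q) :
    vertexCount V ρ (iteratedCut r σ w l) = vertexCount V ρ (iteratedCut r σ' w l) := by
  obtain ⟨ψ, hψ, hbψ⟩ := iteratedCut_sub_mem_map_boundary h hσ hσ' hw hbw l
  have hcount := vertexCount_boundary h hρ hψ
  rw [hbψ] at hcount
  simpa [vertexCount, sub_eq_zero] using hcount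

theorem exists_changes_of_vertexCount_ne_zero (h : IsParityComplex G r V)
    (hρ : ∀ (g : G) x, ρ (g • x) = g * ρ x) (hσ : ∀ q (g : G) x, σ q (g • x) = χ q g * σ q x)
    (hσ' : ∀ q (g : G) x, σ' q (g • x) = χ q g * σ' q x)
    (hw : w ∈ invariantChains G X) (hbw : boundary r w = 0) {l : List Q}
    (hl : vertexCount V ρ (iteratedCut r σ' w l) ≠ 0) :
    ∃ x, ∀ q ∈ l, ∃ y z,
      Relation.ReflTransGen r x y ∧ Relation.ReflTransGen r x z ∧ σ q y ≠ σ q z := by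
  rw [← vertexCount_iteratedCut_eq h hρ hσ hσ' hw hbw] at hl
  obtain ⟨x, -, hx⟩ := exists_ne_zero_of_sum_ne_zero hl
  exact ⟨x, fun q => exists_changes_of_iteratedCut_apply_ne_zero hx⟩

end Action

end ParityComplex

section Signs

/-- The action of a vector of signs on a vector whose coordinates are grouped into blocks: all
coordinates in a block are multiplied by the sign of that block. -/
def signFlip {ι J A : Type*} [SMul ℤˣ A] (blk : ι → J) (g : J → ℤˣ) (a : ι → A) : ι → A :=
  fun i => g (blk i) • a i

/-- The sign of `t`, with `u` taking the place of the sign of zero. -/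
def signOr {A : Type*} [Zero A] [LT A] [DecidableLT A] (t : A) (u : ℤˣ) : ℤˣ :=
  if 0 < t then 1 else if t < 0 then -1 else u

theorem signOr_smul {A : Type*} [AddCommGroup A] [LinearOrder A] [IsOrderedAddMonoid A]
    (g : ℤˣ) (t : A) (u : ℤˣ) : signOr (g • t) (g * u) = g * signOr t u := by
  rcases Int.units_eq_one_or g with rfl | rfl
  · simp
  · rcases lt_trichotomy t 0 with h | h | h <;>
      simp [signOr, Units.neg_smul, h, h.not_gt]

theorem natAbs_units_smul (u : ℤˣ) (a : ℤ) : (u • a).natAbs = a.natAbs := by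
  rw [Units.smul_def, smul_eq_mul, Int.natAbs_mul, Int.units_natAbs, one_mul]

theorem even_units_smul_iff (u : ℤˣ) (a : ℤ) : Even (u • a) ↔ Even a := by
  rw [← Int.natAbs_even, natAbs_units_smul, Int.natAbs_even]

open scoped Classical in
/-- A sign depending on `a` that is odd wherever this is possible. -/
noncomputable def oddSign {A : Type*} [Neg A] (a : A) : ℤˣ :=
  if WellOrderingRel a (-a) then 1 else -1

theorem oddSign_neg {A : Type*} [InvolutiveNeg A] {a : A} (ha : -a ≠ a) :
    oddSign (-a) = -oddSign a := by
  rcases trichotomous_of WellOrderingRel a (-a) with h | h | h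
  · simp [oddSign, h, asymm h]
  · exact absurd h.symm ha
  · simp [oddSign, h, asymm h]

theorem oddSign_units_smul {A : Type*} [AddCommGroup A] {a : A} (ha : -a ≠ a) (u : ℤˣ) :
    oddSign (u • a) = u * oddSign a := by
  rcases Int.units_eq_one_or u with rfl | rfl
  · simp
  · simp [Units.neg_smul, oddSign_neg ha]

end Signs

theorem even_card_of_forall_eq_pair {α : Type*} {s : Finset α}
    (h : ∀ a ∈ s, ∃ b ≠ a, ∀ c, c ∈ s ↔ c = a ∨ c = b) : Even s.card := by
  classical
  rcases s.eq_empty_or_nonempty with rfl | ⟨a, ha⟩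
  · simp
  · obtain ⟨b, hba, hs⟩ := h a ha
    obtain rfl : s = {a, b} := by ext; simp [hs]
    simp [Finset.card_pair hba.symm]

/-- A cell of the product over `j` of the boundaries of the cubes `[-1, 1] ^ blk⁻¹(j)`, all edges
being divided into `2 * m` intervals. An even coordinate `x i` stands for the point `x i / (2 * m)`
and an odd one for the open interval of length `1 / m` around it. -/
@[ext]
structure GridCell {ι J : Type*} (blk : ι → J) (m : ℕ) where
  coord : ι → ℤ
  natAbs_le : ∀ i, (coord i).natAbs ≤ 2 * m
  exists_extremal : ∀ j, ∃ i, blk i = j ∧ (coord i).natAbs = 2 * m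

namespace GridCell

variable {ι J : Type*} {blk : ι → J} {m : ℕ}

instance : CoeFun (GridCell blk m) fun _ => ι → ℤ := ⟨coord⟩

noncomputable instance [Finite ι] : Fintype (GridCell blk m) :=
  have : Finite (GridCell blk m) :=
    .of_injective (β := ι → Set.Icc (-(2 * m) : ℤ) (2 * m))
      (fun x i => ⟨x i, by have := x.natAbs_le i; constructor <;> omega⟩)
      fun x y hxy => GridCell.ext (funext fun i => congr(($hxy i).1))
  .ofFinite _

instance : MulAction (J → ℤˣ) (GridCell blk m) where
  smul g x :=
    { coord := signFlip blk g x
      natAbs_le := fun i => (natAbs_units_smul _ _).trans_le (x.natAbs_le i)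
      exists_extremal := fun j =>
        (x.exists_extremal j).imp fun _ hi => ⟨hi.1, (natAbs_units_smul _ _).trans hi.2⟩ }
  one_smul x := GridCell.ext (funext fun i => one_smul ℤˣ (x i))
  mul_smul g h x := GridCell.ext (funext fun i => mul_smul (g (blk i)) (h (blk i)) (x i))

theorem smul_apply (g : J → ℤˣ) (x : GridCell blk m) (i : ι) : (g • x) i = g (blk i) • x i := rfl

/-- `x` is one of the two facets of `y` in the `i`-th coordinate direction. -/
def IsFacetAt (i : ι) (x y : GridCell blk m) : Prop :=
  Even (x i) ∧ (y i - x i).natAbs = 1 ∧ ∀ k ≠ i, y k = x k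

/-- The facet relation of the cell complex of grid cells. -/
def IsFacet (x y : GridCell blk m) : Prop := ∃ i, IsFacetAt i x y

/-- A grid cell that is a point. -/
def IsVertex (x : GridCell blk m) : Prop := ∀ i, Even (x i)

/-- The sign of the part of `x` in the block `j`. -/
noncomputable def blockSign (j : J) (x : GridCell blk m) : ℤˣ :=
  oddSign fun i : {i // blk i = j} => x i

instance [Fintype ι] [DecidableEq ι] : DecidableRel (IsFacet (blk := blk) (m := m)) :=
  fun _ _ => inferInstanceAs (Decidable (∃ _, _ ∧ _ ∧ _))

instance [Fintype ι] : DecidablePred (IsVertex (blk := blk) (m := m)) :=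
  fun _ => inferInstanceAs (Decidable (∀ _, _))

variable {x y : GridCell blk m} {i k : ι}

theorem ext_of_forall_ne (h : ∀ k ≠ i, x k = y k) (hi : x i = y i) : x = y := by
  ext k
  rcases eq_or_ne k i with rfl | hk
  exacts [hi, h k hk]

theorem IsFacetAt.odd (h : IsFacetAt i x y) : Odd (y i) := by
  have := h.1
  have := h.2.1
  grind

theorem isFacet_smul_iff (g : J → ℤˣ) : IsFacet (g • x) (g • y) ↔ IsFacet x y := by
  simp only [IsFacet, IsFacetAt, smul_apply, even_units_smul_iff]
  refine exists_congr fun i => and_congr_right' (and_congr ?_ (forall₂_congr fun k _ => ?_))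
  · rw [← smul_sub, natAbs_units_smul]
  · exact smul_left_cancel_iff (g (blk k))

theorem isVertex_smul_iff (g : J → ℤˣ) : IsVertex (g • x) ↔ IsVertex x := by
  simp only [IsVertex, smul_apply, even_units_smul_iff]

theorem natAbs_sub_le_one_of_reflTransGen (h : Relation.ReflTransGen IsFacet x y) (i : ι) :
    (y i - x i).natAbs ≤ 1 := by
  suffices y i = x i ∨ Odd (y i) ∧ (y i - x i).natAbs = 1 by grind
  induction h with
  | refl => exact .inl rfl
  | tail _ hyz ih =>
    obtain ⟨k, hk⟩ := hyz
    rcases eq_or_ne i k with rfl | hik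
    · have := hk.odd
      have := hk.1
      have := hk.2.1
      grind
    · rwa [hk.2.2 i hik]

theorem exists_extremal_ne_of_odd (h : Odd (x i)) :
    ∃ k ≠ i, blk k = blk i ∧ (x k).natAbs = 2 * m := by
  obtain ⟨k, hk, hxk⟩ := x.exists_extremal (blk i)
  refine ⟨k, ?_, hk, hxk⟩
  rintro rfl
  grind

/-- The cell obtained from `x` by changing its `i`-th coordinate to `c`. -/
def move [DecidableEq ι] (x : GridCell blk m) (i : ι) (c : ℤ) (hc : c.natAbs ≤ 2 * m)
    (hi : ∃ k ≠ i, blk k = blk i ∧ (x k).natAbs = 2 * m) : GridCell blk m where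
  coord := Function.update x i c
  natAbs_le k := by
    rcases eq_or_ne k i with rfl | hk
    · simpa
    · simpa [hk] using x.natAbs_le k
  exists_extremal j := by
    obtain ⟨k, hk, hxk⟩ := x.exists_extremal j
    rcases eq_or_ne k i with rfl | hki
    · obtain ⟨k', hk', hblk, hxk'⟩ := hi
      exact ⟨k', hblk.trans hk, by simpa [hk'] using hxk'⟩
    · exact ⟨k, hk, by simpa [hki] using hxk⟩

section Move

variable [DecidableEq ι] {c : ℤ} {hc : c.natAbs ≤ 2 * m}
  {hi : ∃ k ≠ i, blk k = blk i ∧ (x k).natAbs = 2 * m}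

@[simp]
theorem move_self : x.move i c hc hi i = c := Function.update_self ..

@[simp]
theorem move_of_ne (hk : k ≠ i) : x.move i c hc hi k = x k := Function.update_of_ne hk ..

theorem isFacetAt_move (hx : Even (x i)) (hxc : (c - x i).natAbs = 1) :
    IsFacetAt i x (x.move i c hc hi) :=
  ⟨hx, by simpa, fun k hk => move_of_ne hk⟩

theorem move_isFacetAt (hc' : Even c) (hxc : (x i - c).natAbs = 1) :
    IsFacetAt i (x.move i c hc hi) x :=
  ⟨by simpa, by simpa, fun k hk => (move_of_ne hk).symm⟩

theorem eq_move (hxy : ∀ k ≠ i, y k = x k) (hyc : y i = c) : y = x.move i c hc hi :=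
  ext_of_forall_ne (fun k hk => by rw [hxy k hk, move_of_ne hk]) (by rw [hyc, move_self])

end Move

section Parity

variable [Fintype ι] [DecidableEq ι]

theorem even_card_isFacet_isFacet (x z : GridCell blk m) :
    Even (Finset.card {y | IsFacet x y ∧ IsFacet y z}) := by
  refine even_card_of_forall_eq_pair fun y hy => ?_
  simp only [Finset.mem_filter_univ] at hy ⊢
  obtain ⟨⟨i, hi⟩, k, hk⟩ := hy
  have hik : k ≠ i := by
    rintro rfl
    exact Int.not_even_iff_odd.2 hi.odd hk.1
  have hzi : Odd (z i) := hk.2.2 i hik.symm ▸ hi.odd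
  refine ⟨z.move i (x i) (x.natAbs_le i) (exists_extremal_ne_of_odd hzi), ?_, fun w => ⟨?_, ?_⟩⟩
  · have := hi.2.1
    grind [move_self]
  · rintro ⟨⟨a, ha⟩, b, hb⟩
    rcases eq_or_ne a i with rfl | hai
    · have hab : a ≠ b := by
        rintro rfl
        exact Int.not_even_iff_odd.2 ha.odd hb.1
      exact .inl (ext_of_forall_ne (fun l hl => (ha.2.2 l hl).trans (hi.2.2 l hl).symm)
        ((hb.2.2 a hab).symm.trans (hk.2.2 a hik.symm)))
    · have hwi : w i = x i := ha.2.2 i hai.symm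
      obtain rfl : i = b := by
        by_contra hib
        exact Int.not_even_iff_odd.2 hzi (hb.2.2 i hib ▸ hwi ▸ hi.1)
      exact .inr (eq_move (fun l hl => (hb.2.2 l hl).symm) hwi)
  · rintro (rfl | rfl)
    · exact ⟨⟨i, hi⟩, k, hk⟩
    · have hxk : y k = x k := hi.2.2 k hik
      refine ⟨⟨k, hxk ▸ hk.1, ?_, fun l hl => ?_⟩, i, move_isFacetAt hi.1 ?_⟩
      · rw [move_of_ne hik, ← hxk, hk.2.1]
      · rcases eq_or_ne l i with rfl | hli
        · exact move_self
        · rw [move_of_ne hli, hk.2.2 l hl, hi.2.2 l hli]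
      · rw [hk.2.2 i hik.symm, hi.2.1]

theorem even_card_isVertex_isFacet (y : GridCell blk m) :
    Even (Finset.card {x | IsVertex x ∧ IsFacet x y}) := by
  refine even_card_of_forall_eq_pair fun x hx => ?_
  simp only [Finset.mem_filter_univ] at hx ⊢
  obtain ⟨hx, i, hi⟩ := hx
  have hx1 := hi.2.1
  have hyi := hi.odd
  have hy := y.natAbs_le i
  refine ⟨y.move i (2 * y i - x i) (by grind) (exists_extremal_ne_of_odd hyi), ?_,
    fun w => ⟨?_, ?_⟩⟩
  · grind [move_self]
  · rintro ⟨-, k, hk⟩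
    obtain rfl : k = i := by
      by_contra hki
      exact Int.not_even_iff_odd.2 hk.odd (hi.2.2 k hki ▸ hx k)
    have hwk : w k = x k ∨ w k = 2 * y k - x k := by
      have := hk.2.1
      omega
    exact hwk.imp (ext_of_forall_ne fun l hl => (hk.2.2 l hl).symm.trans (hi.2.2 l hl))
      (eq_move fun l hl => (hk.2.2 l hl).symm)
  · have hc : Even (2 * y i - x i) := by simp [Int.even_sub, hx i]
    rintro (rfl | rfl)
    · exact ⟨hx, i, hi⟩
    · refine ⟨fun k => ?_, i, move_isFacetAt hc (by omega)⟩
      rcases eq_or_ne k i with rfl | hk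
      · rwa [move_self]
      · rw [move_of_ne hk, hi.2.2 k hk]
        exact hx k

theorem isParityComplex :
    IsParityComplex (J → ℤˣ) (IsFacet (blk := blk) (m := m)) IsVertex where
  even_card_between := even_card_isFacet_isFacet
  even_card_ends := even_card_isVertex_isFacet
  facet_smul_iff g _ _ := isFacet_smul_iff g
  vertex_smul_iff g _ := isVertex_smul_iff g

end Parity

theorem blockSign_congr {j : J} (h : ∀ i, blk i = j → x i = y i) :
    blockSign j x = blockSign j y :=
  congrArg oddSign (funext fun i => h i i.2)

theorem IsFacetAt.blockSign_eq {j : J} (h : IsFacetAt k x y) (hj : blk k ≠ j) :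
    blockSign j x = blockSign j y :=
  blockSign_congr fun _ hi => (h.2.2 _ (ne_of_apply_ne blk (hi.trans_ne hj.symm))).symm

section NeZero

variable [NeZero m]

theorem ne_zero_of_extremal (h : (x i).natAbs = 2 * m) : x i ≠ 0 := by
  have := NeZero.ne m
  omega

theorem blockSign_smul (g : J → ℤˣ) (x : GridCell blk m) (j : J) :
    blockSign j (g • x) = g j * blockSign j x := by
  have restrict_smul :
      (fun i : {i // blk i = j} => (g • x) i) = g j • fun i : {i // blk i = j} => x i := by
    funext ⟨i, hi⟩
    simp [smul_apply, hi]
  rw [blockSign, blockSign, restrict_smul, oddSign_units_smul]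
  obtain ⟨i, hi, hxi⟩ := x.exists_extremal j
  have := ne_zero_of_extremal hxi
  intro h
  have hneg : -x i = x i := congrFun h ⟨i, hi⟩
  omega

end NeZero

/-- A cell on which the coordinates in `K` vanish and which, in each block, has full dimension in
the remaining coordinates: these are the cells of top dimension in the part of the product of
spheres on which the coordinates in `K` vanish. -/
def IsSliceCell (K : Finset ι) (x : GridCell blk m) : Prop :=
  (∀ i ∈ K, x i = 0) ∧ Set.InjOn blk {i | i ∉ K ∧ Even (x i)}

open scoped Classical in
/-- The fundamental class, mod 2, of the part of the product of spheres on which the coordinates in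
`K` vanish. -/
noncomputable def sliceChain (K : Finset ι) (x : GridCell blk m) : ZMod 2 :=
  if IsSliceCell K x then 1 else 0

variable {K : Finset ι}

theorem isSliceCell_smul_iff (g : J → ℤˣ) : IsSliceCell K (g • x) ↔ IsSliceCell K x := by
  simp only [IsSliceCell, smul_apply, even_units_smul_iff, smul_eq_zero_iff_eq]

theorem sliceChain_mem_invariantChains :
    sliceChain (blk := blk) (m := m) K ∈ invariantChains (J → ℤˣ) (GridCell blk m) :=
  fun g x => by
    classical
    exact if_congr (isSliceCell_smul_iff g) rfl rfl

theorem IsSliceCell.notMem_of_odd (hy : IsSliceCell K y) (hi : Odd (y i)) : i ∉ K := by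
  intro hiK
  simp [hy.1 i hiK] at hi

theorem IsSliceCell.natAbs_eq_of_even [NeZero m] (hy : IsSliceCell K y) (hi : i ∉ K)
    (hyi : Even (y i)) : (y i).natAbs = 2 * m := by
  obtain ⟨p, hp, hyp⟩ := y.exists_extremal (blk i)
  have hpK : p ∉ K := fun h => ne_zero_of_extremal hyp (hy.1 p h)
  obtain rfl : p = i := hy.2 ⟨hpK, by grind⟩ ⟨hi, hyi⟩ hp
  exact hyp

theorem IsFacetAt.isSliceCell_insert [DecidableEq ι] (h : IsFacetAt i x y) (hi : x i = 0)
    (hy : IsSliceCell K y) : IsSliceCell (insert i K) x := by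
  have hiK := hy.notMem_of_odd h.odd
  refine ⟨fun k hk => ?_, hy.2.mono fun k ⟨hk, hxk⟩ => ?_⟩
  · rcases Finset.mem_insert.1 hk with rfl | hk
    · exact hi
    · rw [← h.2.2 k (ne_of_mem_of_not_mem hk hiK), hy.1 k hk]
  · obtain ⟨hki, hkK⟩ := not_or.1 (Finset.mem_insert.not.1 hk)
    exact ⟨hkK, by rwa [h.2.2 k hki]⟩

theorem IsFacetAt.isSliceCell_of_insert [DecidableEq ι] (h : IsFacetAt i x y) (hi : i ∉ K)
    (hx : IsSliceCell (insert i K) x) : IsSliceCell K y := by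
  refine ⟨fun k hk => ?_, hx.2.mono fun k ⟨hk, hyk⟩ => ?_⟩
  · rw [h.2.2 k (ne_of_mem_of_not_mem hk hi), hx.1 k (Finset.mem_insert_of_mem hk)]
  · have hki : k ≠ i := by
      rintro rfl
      exact Int.not_even_iff_odd.2 h.odd hyk
    exact ⟨by simp [hki, hk], by rwa [← h.2.2 k hki]⟩

theorem isSliceCell_empty_iff_of_isFacetAt {y z : GridCell blk m} {p : ι} (hy : IsSliceCell ∅ y)
    (hxy : IsFacetAt i x y) (hpi : p ≠ i) (hp : blk p = blk i) (hyp : Even (y p))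
    (hxz : IsFacetAt k x z) : IsSliceCell ∅ z ↔ k = i ∨ k = p := by
  have even_of_even {a : ι} (ha : Even (z a)) : a ≠ k ∧ (a = i ∨ Even (y a)) := by
    have hak : a ≠ k := by
      rintro rfl
      exact Int.not_even_iff_odd.2 hxz.odd ha
    refine ⟨hak, or_iff_not_imp_left.2 fun hai => ?_⟩
    rwa [hxy.2.2 a hai, ← hxz.2.2 a hak]
  have eq_of_blk_eq {a b : ι} (ha : Even (y a)) (hb : Even (y b)) (hab : blk a = blk b) : a = b :=
    hy.2 ⟨by simp, ha⟩ ⟨by simp, hb⟩ hab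
  refine ⟨fun hz => ?_, fun hk => ⟨by simp, fun a ⟨_, ha⟩ b ⟨_, hb⟩ hab => ?_⟩⟩
  · by_contra! hk
    have hzi : Even (z i) := hxz.2.2 i hk.1.symm ▸ hxy.1
    have hzp : Even (z p) := by rwa [hxz.2.2 p hk.2.symm, ← hxy.2.2 p hpi]
    exact hpi (hz.2 ⟨by simp, hzp⟩ ⟨by simp, hzi⟩ hp)
  · obtain ⟨hak, rfl | hya⟩ := even_of_even ha <;> obtain ⟨hbk, rfl | hyb⟩ := even_of_even hb
    · rfl
    · exact absurd (eq_of_blk_eq hyb hyp (hab.symm.trans hp.symm)) (by grind)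
    · exact absurd (eq_of_blk_eq hya hyp (hab.trans hp.symm)) (by grind)
    · exact eq_of_blk_eq hya hyb hab

theorem isFacet_and_isSliceCell_empty_iff {y z : GridCell blk m} {p : ι} (hy : IsSliceCell ∅ y)
    (hxy : IsFacetAt i x y) (hpi : p ≠ i) (hp : blk p = blk i) (hyp : Even (y p)) :
    IsFacet x z ∧ IsSliceCell ∅ z ↔ IsFacetAt i x z ∨ IsFacetAt p x z := by
  have iff_of_facet {k} (hz : IsFacetAt k x z) :=
    isSliceCell_empty_iff_of_isFacetAt hy hxy hpi hp hyp hz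
  constructor
  · rintro ⟨⟨k, hk⟩, hz⟩
    rcases (iff_of_facet hk).1 hz with rfl | rfl
    exacts [.inl hk, .inr hk]
  · rintro (hz | hz)
    exacts [⟨⟨i, hz⟩, (iff_of_facet hz).2 (.inl rfl)⟩, ⟨⟨p, hz⟩, (iff_of_facet hz).2 (.inr rfl)⟩]

theorem IsFacetAt.eq_iff {z : GridCell blk m} (hy : IsFacetAt i x y) (hz : IsFacetAt i x z) :
    z = y ↔ z i = y i :=
  ⟨fun h => by rw [h], ext_of_forall_ne fun k hk => (hz.2.2 k hk).trans (hy.2.2 k hk).symm⟩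

theorem IsFacetAt.eq_of_extremal {z : GridCell blk m} (hy : IsFacetAt i x y)
    (hi : (x i).natAbs = 2 * m) (hz : IsFacetAt i x z) : z = y := by
  rw [hy.eq_iff hz]
  have := hy.2.1
  have := hz.2.1
  have := y.natAbs_le i
  have := z.natAbs_le i
  omega

section Boundary

variable [NeZero m]

/-- In the block of the coordinate `i` along which `y` extends its facet `x`, there is a single
extremal coordinate `p` other than `i`. If `x i` is not extremal, the other slice cell having `x` as
a facet extends `x` along `i` in the opposite direction; otherwise it extends `x` along `p`. -/
theorem exists_isSliceCell_eq_pair (hy : IsSliceCell ∅ y) (hxy : IsFacetAt i x y) :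
    ∃ z ≠ y, ∀ w, IsFacet x w ∧ IsSliceCell ∅ w ↔ w = y ∨ w = z := by
  classical
  obtain ⟨p, hpi, hp, hyp⟩ := exists_extremal_ne_of_odd hxy.odd
  have slice_iff (w : GridCell blk m) :=
    isFacet_and_isSliceCell_empty_iff (z := w) hy hxy hpi hp (by grind)
  have hxp : (x p).natAbs = 2 * m := hxy.2.2 p hpi ▸ hyp
  have hxi := hxy.1
  have hyi := hxy.2.1
  simp only [slice_iff]
  by_cases hext : (x i).natAbs = 2 * m
  · obtain ⟨c, hc, hxc⟩ : ∃ c : ℤ, c.natAbs ≤ 2 * m ∧ (c - x p).natAbs = 1 :=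
      ⟨if 0 < x p then x p - 1 else x p + 1, by have := NeZero.ne m; split_ifs <;> omega⟩
    obtain ⟨z, hxz⟩ : ∃ z, IsFacetAt p x z :=
      ⟨x.move p c hc ⟨i, hpi.symm, hp.symm, hext⟩, isFacetAt_move (by grind) hxc⟩
    refine ⟨z, ?_, fun w => or_congr ?_ ?_⟩
    · rintro rfl
      simp [hxz.2.2 i hpi.symm] at hyi
    · exact ⟨hxy.eq_of_extremal hext, fun h => h ▸ hxy⟩
    · exact ⟨hxz.eq_of_extremal hxp, fun h => h ▸ hxz⟩
  · have hc : (2 * x i - y i).natAbs ≤ 2 * m := by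
      have := x.natAbs_le i
      grind
    obtain ⟨z, hxz, hzi⟩ : ∃ z, IsFacetAt i x z ∧ z i = 2 * x i - y i :=
      ⟨x.move i _ hc ⟨p, hpi, hp, hxp⟩, isFacetAt_move hxi (by omega), move_self⟩
    refine ⟨z, ?_, fun w => ⟨?_, ?_⟩⟩
    · rintro rfl
      omega
    · rintro (hw | hw)
      · rw [hxy.eq_iff hw, hxz.eq_iff hw, hzi]
        have := hw.2.1
        omega
      · have hwi := hw.2.2 i hpi.symm
        exact absurd (hwi ▸ ((slice_iff w).2 (.inr hw)).2.natAbs_eq_of_even (Finset.notMem_empty i)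
          (hwi ▸ hxi)) hext
    · rintro (rfl | rfl)
      exacts [.inl hxy, .inl hxz]

theorem boundary_sliceChain_empty [Fintype ι] [DecidableEq ι] :
    boundary IsFacet (sliceChain (blk := blk) (m := m) ∅) = 0 := by
  classical
  funext x
  have even_card : Even (Finset.card {y : GridCell blk m | IsFacet x y ∧ IsSliceCell ∅ y}) :=
    even_card_of_forall_eq_pair fun y hy => by
      simp only [Finset.mem_filter_univ] at hy ⊢
      exact exists_isSliceCell_eq_pair hy.2 hy.1.choose_spec
  simp only [boundary_apply, sliceChain, ← Finset.sum_filter, Finset.filter_filter,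
    Finset.sum_const, nsmul_eq_mul, mul_one, Pi.zero_apply]
  exact ZMod.natCast_eq_zero_iff_even.2 even_card

end Boundary

/-- The extremal coordinate of the block must be its only coordinate outside `K`. -/
theorem IsSliceCell.blockSign_eq_of_isFacet [NeZero m] {j : J} (hy : IsSliceCell K y)
    (hxy : IsFacet x y) (hj : {i | i ∉ K ∧ blk i = j}.Subsingleton) :
    blockSign j x = blockSign j y := by
  obtain ⟨k, hk⟩ := hxy
  refine hk.blockSign_eq ?_
  rintro rfl
  obtain ⟨p, hpk, hp, hyp⟩ := exists_extremal_ne_of_odd hk.odd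
  have hpK : p ∉ K := fun h => ne_zero_of_extremal hyp (hy.1 p h)
  exact hpk (hj ⟨hpK, hp⟩ ⟨hy.notMem_of_odd hk.odd, rfl⟩)

theorem IsSliceCell.isFacetAt_of_signOr_ne [NeZero m] (hy : IsSliceCell K y) (hxy : IsFacet x y)
    (hi : i ∉ K)
    (h : signOr (x i) (blockSign (blk i) x) ≠ signOr (y i) (blockSign (blk i) y)) :
    IsFacetAt i x y ∧ x i = 0 := by
  obtain ⟨k, hk⟩ := hxy
  have hki : k = i := by
    by_contra hki
    have hyi := hk.2.2 i (Ne.symm hki)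
    have hxi : x i = 0 := by
      by_contra hxi
      rcases lt_or_gt_of_ne hxi with hxi | hxi <;> simp [signOr, hyi, hxi, hxi.not_gt] at h
    have := hy.natAbs_eq_of_even hi (by simp [hyi, hxi])
    exact ne_zero_of_extremal this (hyi.trans hxi)
  subst hki
  refine ⟨hk, ?_⟩
  by_contra hxk
  have := hk.1
  have := hk.2.1
  rcases lt_or_gt_of_ne hxk with hxk | hxk
  · have hyk : y k < 0 := by grind
    simp [signOr, hxk, hyk, hxk.not_gt, hyk.not_gt] at h
  · have hyk : 0 < y k := by grind
    simp [signOr, hxk, hyk] at h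

/-- A label changing its sign under `g` by the product of `g j` over `j ∈ v`, provided that
`blk i ∈ v`, and for which the cells adjacent to the hyperplane `x i = 0` are easily found. -/
noncomputable def coordLabel [DecidableEq J] (i : ι) (v : Finset J) (x : GridCell blk m) : ℤˣ :=
  signOr (x i) (blockSign (blk i) x) * ∏ j ∈ v.erase (blk i), blockSign j x

theorem coordLabel_smul [NeZero m] [DecidableEq J] {v : Finset J} (hi : blk i ∈ v)
    (g : J → ℤˣ) (x : GridCell blk m) :
    coordLabel i v (g • x) = (∏ j ∈ v, g j) * coordLabel i v x := by
  simp only [coordLabel, smul_apply, blockSign_smul, signOr_smul, Finset.prod_mul_distrib,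
    ← Finset.mul_prod_erase v g hi]
  ac_rfl

theorem signOr_ne_signOr_iff {s t : ℤ} (hs : s = 0) (ht : t.natAbs = 1) (u u' : ℤˣ) :
    signOr s u ≠ signOr t u' ↔ t = -u := by
  subst hs
  rcases Int.natAbs_eq_iff.1 ht with rfl | rfl <;> rcases Int.units_eq_one_or u with rfl | rfl <;>
    simp [signOr]

section Cut

variable [NeZero m] [LinearOrder J] {v : Finset J}

theorem IsSliceCell.coordLabel_ne_iff_of_isFacet (hv : ∀ j ∈ v, j ≤ blk i)
    (hK : ∀ j < blk i, {k | k ∉ K ∧ blk k = j}.Subsingleton)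
    (hy : IsSliceCell K y) (hxy : IsFacet x y) :
    coordLabel i v x ≠ coordLabel i v y ↔
      signOr (x i) (blockSign (blk i) x) ≠ signOr (y i) (blockSign (blk i) y) := by
  have prod_eq : ∏ j ∈ v.erase (blk i), blockSign j x = ∏ j ∈ v.erase (blk i), blockSign j y :=
    Finset.prod_congr rfl fun j hj =>
      hy.blockSign_eq_of_isFacet hxy (hK j ((hv j (Finset.mem_of_mem_erase hj)).lt_of_ne
        (Finset.ne_of_mem_erase hj)))
  rw [coordLabel, coordLabel, prod_eq, Ne, mul_left_inj]

theorem isFacet_and_coordLabel_ne_iff [DecidableEq ι] (hi : i ∉ K) (hv : ∀ j ∈ v, j ≤ blk i)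
    (hK : ∀ j < blk i, {k | k ∉ K ∧ blk k = j}.Subsingleton) :
    (IsFacet x y ∧ coordLabel i v x ≠ coordLabel i v y) ∧ IsSliceCell K y ↔
      IsSliceCell (insert i K) x ∧ IsFacetAt i x y ∧ y i = -blockSign (blk i) x := by
  constructor
  · rintro ⟨⟨hxy, hne⟩, hy⟩
    rw [hy.coordLabel_ne_iff_of_isFacet hv hK hxy] at hne
    obtain ⟨hxy, hxi⟩ := hy.isFacetAt_of_signOr_ne hxy hi hne
    refine ⟨hxy.isSliceCell_insert hxi hy, hxy, ?_⟩
    rwa [signOr_ne_signOr_iff hxi (by simpa [hxi] using hxy.2.1)] at hne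
  · rintro ⟨hx, hxy, hyi⟩
    have hxi := hx.1 i (Finset.mem_insert_self i K)
    have hy := hxy.isSliceCell_of_insert hi hx
    refine ⟨⟨⟨i, hxy⟩, ?_⟩, hy⟩
    rwa [hy.coordLabel_ne_iff_of_isFacet hv hK ⟨i, hxy⟩,
      signOr_ne_signOr_iff hxi (by simpa [hxi] using hxy.2.1)]

theorem cut_coordLabel_sliceChain [Fintype ι] [DecidableEq ι] (hi : i ∉ K)
    (hv : ∀ j ∈ v, j ≤ blk i)
    (hK : ∀ j < blk i, {k | k ∉ K ∧ blk k = j}.Subsingleton) :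
    cut (X := GridCell blk m) IsFacet (coordLabel i v) (sliceChain K) =
      sliceChain (insert i K) := by
  classical
  funext x
  simp only [cut_apply, sliceChain, ← Finset.sum_filter, Finset.filter_filter,
    Finset.sum_const, nsmul_eq_mul, mul_one, isFacet_and_coordLabel_ne_iff hi hv hK]
  split_ifs with hx
  · obtain ⟨p, hp, hxp⟩ := x.exists_extremal (blk i)
    have hxi := hx.1 i (Finset.mem_insert_self i K)
    have hpi : p ≠ i := fun h => ne_zero_of_extremal hxp (h ▸ hxi)
    have hxy := isFacetAt_move (x := x) (c := -blockSign (blk i) x) (hi := ⟨p, hpi, hp, hxp⟩)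
      (hc := by have := NeZero.ne m; simp; omega) (by simp [hxi]) (by simp [hxi])
    suffices Finset.card {y | IsSliceCell (insert i K) x ∧ IsFacetAt i x y ∧
        y i = -blockSign (blk i) x} = 1 by simp [this]
    refine Finset.card_eq_one.2 ⟨_, Finset.eq_singleton_iff_unique_mem.2
      ⟨(Finset.mem_filter_univ _).2 ⟨hx, hxy, move_self⟩, fun y hy => ?_⟩⟩
    obtain ⟨-, hy, hyi⟩ := (Finset.mem_filter_univ _).1 hy
    rw [hxy.eq_iff hy, hyi, move_self]
  · simp [hx]

end Cut

end GridCell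

section LabelChange

open GridCell Finset

section Poles

variable {Q J : Type*} {β : Q → J} {m : ℕ} {K : Finset (Q ⊕ J)}

/-- The point `(0, 1)` of the product of spheres, as a grid cell. -/
def poleCell (β : Q → J) (m : ℕ) : GridCell (Sum.elim β id) m where
  coord := Sum.elim 0 fun _ => 2 * m
  natAbs_le := by rintro (_ | _) <;> simp [Int.natAbs_mul]
  exists_extremal j := ⟨.inr j, rfl, by simp [Int.natAbs_mul]⟩

theorem isVertex_poleCell : IsVertex (poleCell β m) := by
  rintro (_ | _) <;> simp [poleCell]

theorem isSliceCell_poleCell (hinl : ∀ q, .inl q ∈ K) (hinr : ∀ j, .inr j ∉ K) :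
    IsSliceCell K (poleCell β m) := by
  constructor
  · rintro (_ | j) hi
    exacts [rfl, absurd hi (hinr j)]
  · rintro (q | _) hi (q' | _) hi' hii'
    exacts [absurd (hinl q) hi.1, absurd (hinl q) hi.1, absurd (hinl q') hi'.1,
      congrArg Sum.inr hii']

theorem exists_eq_smul_poleCell [NeZero m] {x : GridCell (Sum.elim β id) m}
    (hx : ∀ q, x (.inl q) = 0) : ∃ g : J → ℤˣ, x = g • poleCell β m := by
  have extremal_inr (j : J) : ∃ u : ℤˣ, x (.inr j) = u • (2 * m : ℤ) := by
    obtain ⟨q | j, rfl, hxi⟩ := x.exists_extremal j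
    · exact absurd (hx q) (ne_zero_of_extremal hxi)
    · rcases Int.natAbs_eq_iff.1 hxi with h | h
      exacts [⟨1, by simpa using h⟩, ⟨-1, by simpa [Units.neg_smul] using h⟩]
  choose g hg using extremal_inr
  refine ⟨g, GridCell.ext (funext ?_)⟩
  rintro (q | j)
  exacts [(hx q).trans (smul_zero _).symm, hg j]

theorem vertexCount_sliceChain_eq_one [Fintype Q] [Fintype J] [NeZero m]
    (hinl : ∀ q, .inl q ∈ K) (hinr : ∀ j, .inr j ∉ K) :
    vertexCount (X := GridCell (Sum.elim β id) m) IsVertex (fun x j => blockSign j x)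
      (sliceChain K) = 1 := by
  classical
  suffices Finset.card {x : GridCell (Sum.elim β id) m |
      (IsVertex x ∧ (fun j => blockSign j x) = 1) ∧ IsSliceCell K x} = 1 by
    simp [vertexCount, sliceChain, filter_filter, this]
  refine card_eq_one.2 ⟨(fun j => blockSign j (poleCell β m))⁻¹ • poleCell β m,
    eq_singleton_iff_unique_mem.2 ⟨?_, fun x hx => ?_⟩⟩
  · rw [mem_filter_univ, isVertex_smul_iff, isSliceCell_smul_iff]
    exact ⟨⟨isVertex_poleCell, funext fun j => by simp [blockSign_smul]⟩,
      isSliceCell_poleCell hinl hinr⟩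
  · obtain ⟨⟨-, hsign⟩, hx⟩ := (mem_filter_univ _).1 hx
    obtain ⟨g, rfl⟩ := exists_eq_smul_poleCell fun q => hx.1 _ (hinl q)
    congr 1
    funext j
    simpa [blockSign_smul, mul_eq_one_iff_eq_inv] using congrFun hsign j

end Poles

variable {Q J : Type*} [LinearOrder J] {β : Q → J} {v : Q → Finset J}
  {m : ℕ} [NeZero m]

theorem iteratedCut_coordLabel_eq_sliceChain [Fintype Q] [Fintype J] [DecidableEq Q]
    (hβ : ∀ q, IsGreatest (v q : Set J) (β q)) {l : List Q} (hnodup : l.Nodup)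
    (hsorted : l.Pairwise fun q q' => β q' ≤ β q) (hclosed : ∀ q ∈ l, ∀ q', β q' < β q → q' ∈ l) :
    iteratedCut (X := GridCell (Sum.elim β id) m) IsFacet (fun q => coordLabel (.inl q) (v q))
      (sliceChain ∅) l = sliceChain (l.map Sum.inl).toFinset := by
  induction l with
  | nil => rfl
  | cons q l ih =>
    obtain ⟨hql, hnodup⟩ := List.nodup_cons.1 hnodup
    obtain ⟨hq, hsorted⟩ := List.pairwise_cons.1 hsorted
    have hclosed' : ∀ q₁ ∈ l, ∀ q', β q' < β q₁ → q' ∈ l := fun q₁ hq₁ q' hq' =>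
      (List.mem_cons.1 (hclosed q₁ (List.mem_cons_of_mem q hq₁) q' hq')).resolve_left
        fun h => ((hq q₁ hq₁).trans_lt (h ▸ hq')).false
    have eq_inr_of_lt {j : J} (hj : j < β q) {i : Q ⊕ J} (hi : i ∉ (l.map Sum.inl).toFinset)
        (hij : Sum.elim β id i = j) : i = .inr j := by
      cases i with
      | inl q' =>
        have hq'q : β q' < β q := hij.trans_lt hj
        have hq' := (List.mem_cons.1 (hclosed q List.mem_cons_self q' hq'q)).resolve_left
          fun h => (h ▸ hq'q).false
        simp [hq'] at hi
      | inr j' => exact congrArg Sum.inr hij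
    calc iteratedCut IsFacet (fun q => coordLabel (.inl q) (v q)) (sliceChain ∅) (q :: l)
        = cut IsFacet (coordLabel (.inl q) (v q)) (sliceChain (l.map Sum.inl).toFinset) :=
          congrArg _ (ih hnodup hsorted hclosed')
      _ = sliceChain ((q :: l).map Sum.inl).toFinset := by
          rw [cut_coordLabel_sliceChain (blk := Sum.elim β id) (i := .inl q) (by simpa)
            (fun j hj => (hβ q).2 hj) fun j hj i hi k hk =>
              (eq_inr_of_lt hj hi.1 hi.2).trans (eq_inr_of_lt hj hk.1 hk.2).symm]
          simp

theorem exists_gridCell_forall_label_change [Finite Q] [Finite J]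
    (hβ : ∀ q, IsGreatest (v q : Set J) (β q))
    {σ : Q → GridCell (Sum.elim β id) m → ℤˣ}
    (hσ : ∀ q (g : J → ℤˣ) x, σ q (g • x) = (∏ j ∈ v q, g j) * σ q x) :
    ∃ x, ∀ q, ∃ y z, Relation.ReflTransGen IsFacet x y ∧ Relation.ReflTransGen IsFacet x z ∧
      σ q y ≠ σ q z := by
  classical
  have := Fintype.ofFinite Q
  have := Fintype.ofFinite J
  let l := (univ : Finset Q).toList.insertionSort fun q q' => β q' ≤ β q
  have hl (q : Q) : q ∈ l := by simp [l]
  have hsorted : l.Pairwise fun q q' => β q' ≤ β q :=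
    have : Std.Total fun q q' => β q' ≤ β q := ⟨fun q q' => le_total (β q') (β q)⟩
    have : IsTrans Q fun q q' => β q' ≤ β q := ⟨fun _ _ _ h h' => h'.trans h⟩
    List.pairwise_insertionSort _ _
  have hnodup : l.Nodup := by simp [l, (List.perm_insertionSort _ _).nodup_iff, nodup_toList]
  have hcount : vertexCount (X := GridCell (Sum.elim β id) m) IsVertex (fun x j => blockSign j x)
      (iteratedCut IsFacet (fun q => coordLabel (.inl q) (v q)) (sliceChain ∅) l) ≠ 0 := by
    rw [iteratedCut_coordLabel_eq_sliceChain hβ hnodup hsorted fun _ _ q' _ => hl q',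
      vertexCount_sliceChain_eq_one (by simp [hl]) (by simp)]
    exact one_ne_zero
  obtain ⟨x, hx⟩ := exists_changes_of_vertexCount_ne_zero isParityComplex
    (fun g x => funext (blockSign_smul g x)) hσ
    (fun q => coordLabel_smul (blk := Sum.elim β id) (i := .inl q) (hβ q).1)
    sliceChain_mem_invariantChains boundary_sliceChain_empty hcount
  exact ⟨x, fun q => hx q (hl q)⟩

end LabelChange

section BorsukUlam

open Filter Topology

variable {ι J Q : Type*} {blk : ι → J} {m : ℕ}

/-- The product over `j` of the boundaries of the cubes `[-1, 1] ^ blk⁻¹(j)`. -/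
def cubeSphereProd (blk : ι → J) : Set (ι → ℝ) :=
  {c | (∀ i, |c i| ≤ 1) ∧ ∀ j, ∃ i, blk i = j ∧ |c i| = 1}

theorem isCompact_cubeSphereProd [Finite ι] [Finite J] : IsCompact (cubeSphereProd blk) := by
  have := Fintype.ofFinite ι
  refine (isCompact_Icc (a := (-1 : ι → ℝ)) (b := 1)).of_isClosed_subset ?_ fun c hc =>
    ⟨fun i => (abs_le.1 (hc.1 i)).1, fun i => (abs_le.1 (hc.1 i)).2⟩
  simp only [cubeSphereProd, Set.ofPred_and, Set.ofPred_forall, Set.ofPred_exists]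
  refine (isClosed_iInter fun i => ?_).inter
    (isClosed_iInter fun j => isClosed_iUnion_of_finite fun i => ?_)
  · exact isClosed_le (by fun_prop) continuous_const
  · exact isClosed_const.inter (isClosed_eq (by fun_prop) continuous_const)

/-- The centre of a grid cell. -/
noncomputable def GridCell.center (x : GridCell blk m) : ι → ℝ := fun i => x i / (2 * m)

namespace GridCell

theorem center_smul (g : J → ℤˣ) (x : GridCell blk m) :
    (g • x).center = signFlip blk g x.center := by
  funext i
  rcases Int.units_eq_one_or (g (blk i)) with h | h <;>
    simp [center, signFlip, smul_apply, h, Units.neg_smul, neg_div]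

theorem center_mem_cubeSphereProd [NeZero m] (x : GridCell blk m) :
    x.center ∈ cubeSphereProd blk := by
  have hm : (0 : ℝ) < 2 * m := by simpa using Nat.pos_of_neZero m
  have abs_center (i : ι) : |x.center i| = (x i).natAbs / (2 * m) := by
    rw [center, abs_div, abs_of_pos hm, Nat.cast_natAbs, Int.cast_abs]
  refine ⟨fun i => ?_, fun j => (x.exists_extremal j).imp fun i hi => ⟨hi.1, ?_⟩⟩
  · rw [abs_center, div_le_one hm]
    exact_mod_cast x.natAbs_le i
  · rw [abs_center, div_eq_one_iff_eq hm.ne']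
    exact_mod_cast hi.2

theorem dist_center_le_of_reflTransGen [Fintype ι] {x y : GridCell blk m}
    (h : Relation.ReflTransGen IsFacet x y) : dist y.center x.center ≤ 1 / (2 * m) := by
  refine (dist_pi_le_iff (by positivity)).2 fun i => ?_
  have hi : |(y i : ℝ) - x i| ≤ 1 := by
    have := natAbs_sub_le_one_of_reflTransGen h i
    rw [← Int.cast_sub, ← Int.cast_abs, Int.abs_eq_natAbs]
    exact_mod_cast this
  rw [Real.dist_eq, center, center, ← sub_div, abs_div,
    abs_of_nonneg (by positivity : (0 : ℝ) ≤ 2 * m)]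
  gcongr

end GridCell

theorem nonpos_and_nonneg_of_signOr_ne {s t : ℝ} {u u' : ℤˣ} (h : signOr s u ≠ signOr t u') :
    s ≤ 0 ∧ 0 ≤ t ∨ t ≤ 0 ∧ 0 ≤ s := by
  grind [signOr]

theorem exists_forall_eq_zero_of_forall_sign_change {E : Type*} [PseudoMetricSpace E] {K : Set E}
    (hK : IsCompact K) {f : Q → E → ℝ} (hf : ∀ q, Continuous (f q))
    (h : ∀ ε > 0, ∃ x ∈ K, ∀ q, ∃ y z, dist y x ≤ ε ∧ dist z x ≤ ε ∧ f q y ≤ 0 ∧ 0 ≤ f q z) :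
    ∃ x ∈ K, ∀ q, f q x = 0 := by
  choose x hxK y z hy hz hfy hfz using fun n : ℕ => h (1 / (n + 1)) Nat.one_div_pos_of_nat
  obtain ⟨c, hc, φ, hφ, hlim⟩ := hK.tendsto_subseq hxK
  have tendsto_of_dist_le {u : ℕ → E} (hu : ∀ n, dist (u n) (x n) ≤ 1 / (n + 1)) :
      Tendsto (u ∘ φ) atTop (𝓝 c) := by
    refine tendsto_of_tendsto_of_dist hlim (squeeze_zero (fun _ => dist_nonneg) (fun n => ?_)
      (tendsto_one_div_add_atTop_nhds_zero_nat.comp hφ.tendsto_atTop))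
    rw [dist_comm]
    exact hu (φ n)
  refine ⟨c, hc, fun q => le_antisymm ?_ ?_⟩
  · exact le_of_tendsto (((hf q).tendsto c).comp (tendsto_of_dist_le fun n => hy n q))
      (.of_forall fun n => hfy (φ n) q)
  · exact ge_of_tendsto (((hf q).tendsto c).comp (tendsto_of_dist_le fun n => hz n q))
      (.of_forall fun n => hfz (φ n) q)

theorem exists_forall_eq_zero_of_equivariant [Finite Q] [Finite J] [LinearOrder J] {β : Q → J}
    {v : Q → Finset J} (hβ : ∀ q, IsGreatest (v q : Set J) (β q)) {f : Q → (Q ⊕ J → ℝ) → ℝ}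
    (hf : ∀ q, Continuous (f q))
    (hsign : ∀ q g c, f q (signFlip (Sum.elim β id) g c) = (∏ j ∈ v q, g j) • f q c) :
    ∃ c ∈ cubeSphereProd (Sum.elim β id), ∀ q, f q c = 0 := by
  have := Fintype.ofFinite Q
  have := Fintype.ofFinite J
  refine exists_forall_eq_zero_of_forall_sign_change isCompact_cubeSphereProd hf fun ε hε => ?_
  obtain ⟨m, hm⟩ := exists_nat_one_div_lt hε
  let σ (q : Q) (x : GridCell (Sum.elim β id) (m + 1)) : ℤˣ :=
    signOr (f q x.center) (∏ j ∈ v q, GridCell.blockSign j x)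
  have hσ (q : Q) (g : J → ℤˣ) (x) : σ q (g • x) = (∏ j ∈ v q, g j) * σ q x := by
    simp only [σ, GridCell.center_smul, hsign, GridCell.blockSign_smul, Finset.prod_mul_distrib,
      signOr_smul]
  obtain ⟨x, hx⟩ := exists_gridCell_forall_label_change hβ hσ
  have dist_le {y} (hy : Relation.ReflTransGen GridCell.IsFacet x y) :
      dist y.center x.center ≤ ε := by
    refine (GridCell.dist_center_le_of_reflTransGen hy).trans (le_trans ?_ hm.le)
    gcongr
    push_cast
    linarith [m.cast_nonneg (α := ℝ)]
  refine ⟨x.center, x.center_mem_cubeSphereProd, fun q => ?_⟩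
  obtain ⟨y, z, hy, hz, hyz⟩ := hx q
  rcases nonpos_and_nonneg_of_signOr_ne hyz with h | h
  exacts [⟨_, _, dist_le hy, dist_le hz, h⟩, ⟨_, _, dist_le hz, dist_le hy, h⟩]

end BorsukUlam

section Equipartition

open Filter Topology Finset

variable {ι J : Type*} {blk : ι → J}

theorem signFlip_signFlip (g h : J → ℤˣ) (c : ι → ℝ) :
    signFlip blk g (signFlip blk h c) = signFlip blk (g * h) c :=
  funext fun i => smul_smul (g (blk i)) (h (blk i)) (c i)

theorem continuous_signFlip (g : J → ℤˣ) :
    Continuous (signFlip blk g : (ι → ℝ) → ι → ℝ) :=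
  continuous_pi fun i => (continuous_apply i).const_smul (g (blk i))

theorem prod_one_add_mul_units [Fintype J] (w w' : J → ℤˣ) :
    ∏ j, (1 + (w j * w' j : ℝ)) = if w' = w then 2 ^ Fintype.card J else 0 := by
  split_ifs with h
  · have two_eq (u : ℤˣ) : 1 + (u * u : ℝ) = 2 := by
      rcases Int.units_eq_one_or u with rfl | rfl <;> norm_num
    simp [h, two_eq]
  · obtain ⟨j, hj⟩ := Function.ne_iff.1 h
    refine prod_eq_zero (mem_univ j) ?_
    rcases Int.units_eq_one_or (w j) with hw | hw <;>
      rcases Int.units_eq_one_or (w' j) with hw' | hw' <;> simp_all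

/-- Fourier inversion on the group of sign vectors. -/
theorem two_pow_card_mul_eq_sum_of_forall_sum_eq_zero [Fintype J] [DecidableEq J]
    {F : (J → ℤˣ) → ℝ}
    (hF : ∀ v : Finset J, v.Nonempty → ∑ w, (∏ j ∈ v, w j) • F w = 0) (w : J → ℤˣ) :
    2 ^ Fintype.card J * F w = ∑ w', F w' := by
  have sum_eq_zero (v : Finset J) (hv : v ≠ ∅) :
      ∑ w', (∏ j ∈ v, (w j * w' j : ℝ)) * F w' = 0 := by
    have := hF v (nonempty_iff_ne_empty.2 hv)
    simp only [Units.smul_def, zsmul_eq_mul, Units.coe_prod, Int.cast_prod] at this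
    simp only [prod_mul_distrib, mul_assoc, ← mul_sum, this, mul_zero]
  calc 2 ^ Fintype.card J * F w
      = ∑ w', (∏ j, (1 + (w j * w' j : ℝ))) * F w' := by simp [prod_one_add_mul_units]
    _ = ∑ v, ∑ w', (∏ j ∈ v, (w j * w' j : ℝ)) * F w' := by
        simp only [prod_one_add, powerset_univ, sum_mul]
        exact sum_comm
    _ = ∑ w', F w' := by
        rw [sum_eq_single ∅ (fun v _ => sum_eq_zero v) (by simp)]
        simp

variable [LinearOrder J]

/-- The index set of the coordinates of the test space: one coordinate for every Fourier coefficient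
that has to vanish, that is, for every nonempty set of blocks, and one more for every block. -/
abbrev TestIndex (J : Type*) : Type _ := {v : Finset J // v.Nonempty} ⊕ J

/-- The block containing a coordinate of the test space. -/
def testBlock : TestIndex J → J := Sum.elim (fun v => v.1.max' v.2) id

theorem exists_forall_two_pow_card_mul_eq_sum_signFlip [Fintype J] {φ : (TestIndex J → ℝ) → ℝ}
    (hφ : Continuous φ) :
    ∃ c ∈ cubeSphereProd testBlock, ∀ w : J → ℤˣ, 2 ^ Fintype.card J * φ (signFlip testBlock w c) =
      ∑ w' : J → ℤˣ, φ (signFlip testBlock w' c) := by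
  let f (q : {v : Finset J // v.Nonempty}) (c : TestIndex J → ℝ) : ℝ :=
    ∑ w : J → ℤˣ, (∏ j ∈ q.1, w j) • φ (signFlip testBlock w c)
  have hf (q) : Continuous (f q) := continuous_finsetSum _ fun w _ =>
    (hφ.comp (continuous_signFlip w)).const_smul (∏ j ∈ q.1, w j)
  have hsign (q) (g : J → ℤˣ) (c) :
      f q (signFlip testBlock g c) = (∏ j ∈ q.1, g j) • f q c := by
    simp only [f, signFlip_signFlip, smul_sum, smul_smul, ← prod_mul_distrib]
    refine Fintype.sum_equiv (Equiv.mulRight g) _ _ fun w => ?_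
    have (u u' : ℤˣ) : u' * (u * u') = u := by rw [mul_comm, mul_assoc, Int.units_mul_self, mul_one]
    simp [this]
  obtain ⟨c, hc, hc0⟩ := exists_forall_eq_zero_of_equivariant (fun q => q.1.isGreatest_max' q.2)
    hf hsign
  exact ⟨c, hc, two_pow_card_mul_eq_sum_of_forall_sum_eq_zero fun v hv => hc0 ⟨v, hv⟩⟩

end Equipartition

section Bump

open Filter Topology

variable {E : Type*} [PseudoEMetricSpace E] {B : Set E}

/-- For open `B`, a sequence of continuous functions increasing to the indicator of `B`. -/
noncomputable def bump (B : Set E) (n : ℕ) (x : E) : ℝ :=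
  1 - thickenedIndicator (Nat.one_div_pos_of_nat (α := ℝ) (n := n)) Bᶜ x

theorem continuous_bump (n : ℕ) : Continuous (bump B n) := by
  unfold bump
  fun_prop

theorem monotone_bump (x : E) : Monotone fun n => bump B n x := fun _ _ h =>
  sub_le_sub_left (NNReal.coe_le_coe.2
    (thickenedIndicator_mono _ _ (Nat.one_div_le_one_div h) _ x)) 1

theorem bump_le_one (n : ℕ) (x : E) : bump B n x ≤ 1 :=
  sub_le_self 1 (NNReal.coe_nonneg _)

theorem bump_of_notMem {x : E} (hx : x ∉ B) (n : ℕ) : bump B n x = 0 := by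
  simp [bump, thickenedIndicator_one _ _ (Set.mem_compl hx)]

theorem tendsto_bump_of_mem (hB : IsOpen B) {x : E} (hx : x ∈ B) :
    Tendsto (fun n => bump B n x) atTop (𝓝 1) := by
  have := (tendsto_pi_nhds.1 (thickenedIndicator_tendsto_indicator_closure
    (fun n => Nat.one_div_pos_of_nat) tendsto_one_div_add_atTop_nhds_zero_nat Bᶜ) x)
  rw [hB.isClosed_compl.closure_eq, Set.indicator_of_notMem (by simpa)] at this
  simpa [bump] using (NNReal.tendsto_coe.2 this).const_sub 1

theorem ncard_le_of_forall_sum_bump_le {I : Type*} {Γ : Finset I} {B : I → Set E}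
    (hB : ∀ i ∈ Γ, IsOpen (B i)) {x : E} {a : ℝ} (h : ∀ n, ∑ i ∈ Γ, bump (B i) n x ≤ a) :
    ({i ∈ (Γ : Set I) | x ∈ B i}.ncard : ℝ) ≤ a := by
  classical
  have ncard_eq : ({i ∈ (Γ : Set I) | x ∈ B i}.ncard : ℝ) = ∑ i ∈ Γ, if x ∈ B i then 1 else 0 := by
    rw [Finset.sum_boole, ← Set.ncard_coe_finset, Finset.coe_filter]
    rfl
  rw [ncard_eq]
  refine le_of_tendsto' (x := atTop) (tendsto_finsetSum Γ fun i hi => ?_) h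
  split_ifs with hx
  · exact tendsto_bump_of_mem (hB i hi) hx
  · simp [bump_of_notMem hx]

end Bump

section OpenEquipartition

open Finset

variable {I J : Type*} [Fintype J] [LinearOrder J] {Γ : Finset I} {B : I → Set (TestIndex J → ℝ)}
  {M : ℕ}

theorem exists_forall_sum_bump_le
    (hM : ∀ i ∈ Γ, ∀ c, {w : J → ℤˣ | signFlip testBlock w c ∈ B i}.ncard ≤ M) (n : ℕ) :
    ∃ c ∈ cubeSphereProd testBlock, ∀ w : J → ℤˣ,
      2 ^ Fintype.card J * ∑ i ∈ Γ, bump (B i) n (signFlip testBlock w c) ≤ #Γ * M := by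
  classical
  obtain ⟨c, hc, hcw⟩ := exists_forall_two_pow_card_mul_eq_sum_signFlip (J := J)
    (continuous_finsetSum Γ fun i _ => continuous_bump (B := B i) n)
  refine ⟨c, hc, fun w => ?_⟩
  rw [hcw, sum_comm, ← nsmul_eq_mul]
  refine sum_le_card_nsmul Γ _ _ fun i hi => ?_
  calc ∑ w : J → ℤˣ, bump (B i) n (signFlip testBlock w c)
      ≤ ∑ w : J → ℤˣ, if signFlip testBlock w c ∈ B i then (1 : ℝ) else 0 := by
        gcongr with w
        split_ifs with hw
        exacts [bump_le_one n _, (bump_of_notMem hw n).le]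
    _ = {w : J → ℤˣ | signFlip testBlock w c ∈ B i}.ncard := by
        rw [sum_boole, ← Set.ncard_coe_finset, coe_filter_univ]
    _ ≤ M := mod_cast hM i hi c

theorem exists_forall_ncard_mul_two_pow_le (hB : ∀ i ∈ Γ, IsOpen (B i))
    (hM : ∀ i ∈ Γ, ∀ c, {w : J → ℤˣ | signFlip testBlock w c ∈ B i}.ncard ≤ M) :
    ∃ c ∈ cubeSphereProd testBlock, ∀ w : J → ℤˣ,
      {i ∈ (Γ : Set I) | signFlip testBlock w c ∈ B i}.ncard * 2 ^ Fintype.card J ≤ #Γ * M := by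
  let K (n : ℕ) : Set (TestIndex J → ℝ) := cubeSphereProd testBlock ∩
    {c | ∀ w : J → ℤˣ,
      2 ^ Fintype.card J * ∑ i ∈ Γ, bump (B i) n (signFlip testBlock w c) ≤ #Γ * M}
  have hclosed (n : ℕ) : IsClosed (K n) := by
    refine isCompact_cubeSphereProd.isClosed.inter ?_
    rw [Set.ofPred_forall]
    refine isClosed_iInter fun w => isClosed_le ?_ continuous_const
    exact continuous_const.mul (continuous_finsetSum Γ fun i _ =>
      (continuous_bump n).comp (continuous_signFlip w))
  obtain ⟨c, hc⟩ := IsCompact.nonempty_iInter_of_sequence_nonempty_isCompact_isClosed K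
    (fun n c hc => ⟨hc.1, fun w => le_trans (by gcongr; exact monotone_bump _ n.le_succ) (hc.2 w)⟩)
    (exists_forall_sum_bump_le hM) (isCompact_cubeSphereProd.of_isClosed_subset (hclosed 0)
      Set.inter_subset_left) hclosed
  rw [Set.mem_iInter] at hc
  refine ⟨c, (hc 0).1, fun w => ?_⟩
  have two_pow_pos : (0 : ℝ) < 2 ^ Fintype.card J := by positivity
  have := ncard_le_of_forall_sum_bump_le hB fun n => (le_div_iff₀' two_pow_pos).2 ((hc n).2 w)
  rw [le_div_iff₀ two_pow_pos] at this
  exact_mod_cast this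

end OpenEquipartition

section BlockPolynomial

open MvPolynomial

variable {ι J σ : Type*}

/-- The set of points at which the sign of `q j` is `w j` for all `j`. -/
def signCell (q : J → MvPolynomial σ ℝ) (w : J → ℤˣ) : Set (σ → ℝ) :=
  {x | ∀ j, 0 < w j • eval x (q j)}

variable [Fintype ι] [DecidableEq J] {blk : ι → J} {mono : ι → σ →₀ ℕ}

/-- The family of polynomials whose `j`-th member has the coefficients `c i`, for `i` in the block
`j`, at the monomials `mono i`. -/
noncomputable def blockPolynomial (blk : ι → J) (mono : ι → σ →₀ ℕ) (c : ι → ℝ) (j : J) :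
    MvPolynomial σ ℝ :=
  ∑ i with blk i = j, monomial (mono i) (c i)

theorem blockPolynomial_signFlip (w : J → ℤˣ) (c : ι → ℝ) (j : J) :
    blockPolynomial blk mono (signFlip blk w c) j = w j • blockPolynomial blk mono c j := by
  rw [blockPolynomial, blockPolynomial, Finset.smul_sum]
  refine Finset.sum_congr rfl fun i hi => ?_
  rw [signFlip, (Finset.mem_filter_univ i).1 hi, smul_monomial]

theorem signCell_blockPolynomial (w : J → ℤˣ) (c : ι → ℝ) :
    signCell (blockPolynomial blk mono c) w =
      signCell (blockPolynomial blk mono (signFlip blk w c)) 1 := by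
  simp only [signCell, blockPolynomial_signFlip, Pi.one_apply, one_smul, Units.smul_def,
    zsmul_eq_mul, map_mul, map_intCast]

theorem coeff_blockPolynomial (c : ι → ℝ) {i : ι}
    (hmono : Set.InjOn mono {k | blk k = blk i}) :
    coeff (mono i) (blockPolynomial blk mono c (blk i)) = c i := by
  classical
  rw [blockPolynomial, coeff_sum, Finset.sum_eq_single i, coeff_monomial, if_pos rfl]
  · intro k hk hki
    rw [coeff_monomial, if_neg]
    exact fun h => hki (hmono ((Finset.mem_filter_univ k).1 hk) rfl h)
  · simp

theorem blockPolynomial_ne_zero {c : ι → ℝ} (hc : c ∈ cubeSphereProd blk) {j : J}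
    (hmono : Set.InjOn mono {i | blk i = j}) : blockPolynomial blk mono c j ≠ 0 := by
  obtain ⟨i, rfl, hi⟩ := hc.2 j
  intro h
  have := coeff_blockPolynomial c hmono
  rw [h, coeff_zero] at this
  simp [← this] at hi

theorem isOpen_nonempty_inter_signCell [Finite J] (S : Set (σ → ℝ)) (w : J → ℤˣ) :
    IsOpen {c | (S ∩ signCell (blockPolynomial blk mono c) w).Nonempty} := by
  have eq_iUnion : {c | (S ∩ signCell (blockPolynomial blk mono c) w).Nonempty} =
      ⋃ x ∈ S, ⋂ j, {c | 0 < w j • eval x (blockPolynomial blk mono c j)} := by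
    ext c
    simp [Set.Nonempty, signCell]
  rw [eq_iUnion]
  refine isOpen_biUnion fun x _ => isOpen_iInter_of_finite fun j =>
    isOpen_lt continuous_const (Continuous.const_smul ?_ (w j))
  simp only [blockPolynomial, map_sum, eval_monomial]
  fun_prop

theorem totalDegree_blockPolynomial_le [Fintype σ] {N : ℕ} {j : J}
    (hmono : ∀ i, blk i = j → ∀ a, mono i a ≤ N) (c : ι → ℝ) :
    (blockPolynomial blk mono c j).totalDegree ≤ Fintype.card σ * N := by
  refine totalDegree_finsetSum_le fun i hi => (totalDegree_monomial_le _ _).trans ?_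
  rw [Finsupp.sum_fintype _ _ fun _ => rfl]
  exact (Finset.sum_le_card_nsmul _ _ N fun a _ =>
    hmono i ((Finset.mem_filter_univ i).1 hi) a).trans_eq (by simp)

end BlockPolynomial

section Exponents

variable {σ : Type*} [Fintype σ] {s : ℕ}

theorem card_testBlock_eq_le (j : Fin s) :
    Fintype.card {i : TestIndex (Fin s) // testBlock i = j} ≤ 2 ^ (j + 1 : ℕ) := by
  let toSet : TestIndex (Fin s) → Finset (Fin s) := Sum.elim Subtype.val fun _ => ∅
  have hmaps (i : TestIndex (Fin s)) : toSet i ∈ (Finset.Iic (testBlock i)).powerset := by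
    cases i with
    | inl v => exact Finset.mem_powerset.2 fun k hk => Finset.mem_Iic.2 (v.1.le_max' k hk)
    | inr k => simp [toSet]
  have hinj : Set.InjOn toSet {i | testBlock i = j} := by
    rintro (v | k) hi (v' | k') hi' h
    · exact congrArg Sum.inl (Subtype.ext h)
    · exact absurd h v.2.ne_empty
    · exact absurd h.symm v'.2.ne_empty
    · exact congrArg Sum.inr (hi.trans hi'.symm)
  calc Fintype.card {i : TestIndex (Fin s) // testBlock i = j}
      = Finset.card {i : TestIndex (Fin s) | testBlock i = j} := Fintype.card_subtype _
    _ ≤ (Finset.Iic j).powerset.card :=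
        Finset.card_le_card_of_injOn toSet
          (fun i hi => (Finset.mem_filter_univ i).1 hi ▸ hmaps i) (by simpa using hinj)
    _ = 2 ^ (j + 1 : ℕ) := by rw [Finset.card_powerset, Fin.card_Iic]

theorem exists_injOn_exponents {ι J : Type*} [Fintype ι] [DecidableEq J] {blk : ι → J} {N : J → ℕ}
    (hN : ∀ j, Fintype.card {i // blk i = j} ≤ N j ^ Fintype.card σ) :
    ∃ mono : ι → σ →₀ ℕ, (∀ j, Set.InjOn mono {i | blk i = j}) ∧ ∀ i a, mono i a ≤ N (blk i) := by
  classical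
  have exists_embedding (j : J) : Nonempty ({i // blk i = j} ↪ (σ → Fin (N j))) :=
    Function.Embedding.nonempty_of_card_le (by simpa using hN j)
  let e (j : J) := (exists_embedding j).some
  refine ⟨fun i => Finsupp.equivFunOnFinite.symm fun a => e (blk i) ⟨i, rfl⟩ a, ?_, fun i a =>
    (e (blk i) ⟨i, rfl⟩ a).2.le⟩
  rintro j i hi k hk h
  have apply_eq {i} (hi : blk i = j) (a : σ) : (e (blk i) ⟨i, rfl⟩ a : ℕ) = e j ⟨i, hi⟩ a := by
    subst hi
    rfl
  have hik : e j ⟨i, hi⟩ = e j ⟨k, hk⟩ := funext fun a => Fin.ext <| by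
    simpa [apply_eq hi, apply_eq hk] using DFunLike.congr_fun h a
  exact congrArg Subtype.val ((e j).injective hik)

theorem card_testBlock_eq_le_pow [Nonempty σ] (j : Fin s) :
    Fintype.card {i : TestIndex (Fin s) // testBlock i = j} ≤
      (2 ^ ((j : ℕ) / Fintype.card σ + 1)) ^ Fintype.card σ := by
  refine (card_testBlock_eq_le j).trans ?_
  rw [← pow_mul, mul_comm]
  exact Nat.pow_le_pow_right two_pos (Nat.lt_mul_div_succ _ Fintype.card_pos)

theorem sum_two_pow_div (n t : ℕ) :
    ∑ j : Fin (n * t), 2 ^ ((j : ℕ) / n + 1) = 2 * n * (2 ^ t - 1) := by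
  rw [Fin.sum_univ_eq_sum_range (fun j => 2 ^ (j / n + 1))]
  induction t with
  | zero => simp
  | succ t ih =>
    have div_eq {x : ℕ} (hx : x ∈ Finset.range n) : (n * t + x) / n = t := by
      have := Finset.mem_range.1 hx
      rw [Nat.mul_add_div (by omega), Nat.div_eq_of_lt this, add_zero]
    rw [mul_add_one, Finset.sum_range_add, ih,
      Finset.sum_congr rfl fun x hx => by rw [div_eq hx], Finset.sum_const, Finset.card_range,
      smul_eq_mul]
    obtain ⟨a, ha⟩ := Nat.exists_eq_add_of_le (Nat.one_le_two_pow (n := t))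
    rw [pow_succ, ha, Nat.add_sub_cancel_left, show (1 + a) * 2 - 1 = 2 * a + 1 by omega]
    ring

end Exponents

section Signs

theorem eq_of_pos_smul {u u' : ℤˣ} {a : ℝ} (h : 0 < u • a) (h' : 0 < u' • a) : u = u' := by
  rcases Int.units_eq_one_or u with rfl | rfl <;> rcases Int.units_eq_one_or u' with rfl | rfl <;>
    simp [Units.neg_smul] at h h' ⊢ <;> linarith

theorem exists_pos_smul {a : ℝ} (ha : a ≠ 0) : ∃ u : ℤˣ, 0 < u • a := by
  rcases ha.lt_or_gt with h | h
  exacts [⟨-1, by simpa [Units.neg_smul] using h⟩, ⟨1, by simpa using h⟩]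

theorem pos_smul_of_isPreconnected {X : Type*} [TopologicalSpace X] {s : Set X}
    (hs : IsPreconnected s) {f : X → ℝ} (hf : ContinuousOn f s) (h0 : ∀ z ∈ s, f z ≠ 0) {x y : X}
    (hx : x ∈ s) (hy : y ∈ s) {u : ℤˣ} (h : 0 < u • f x) : 0 < u • f y := by
  by_contra! hle
  obtain ⟨z, hz, hfz⟩ := hs.intermediate_value hy hx (hf.const_smul u) ⟨hle, h.le⟩
  exact h0 z hz ((smul_eq_zero_iff_eq u).1 hfz)

end Signs

section UnivariateCells

open Polynomial

/-- The set of roots of `p` to the left of `t`. -/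
noncomputable def rootsBelow (p : ℝ[X]) (t : ℝ) : Finset ℝ := {r ∈ p.roots.toFinset | r < t}

theorem card_rootsBelow_le (p : ℝ[X]) (t : ℝ) : (rootsBelow p t).card ≤ p.natDegree :=
  (Finset.card_filter_le _ _).trans (p.roots.toFinset_card_le.trans p.card_roots')

theorem eval_ne_zero_of_card_rootsBelow_eq {p : ℝ[X]} {t t' z : ℝ} (ht' : p.eval t' ≠ 0)
    (hcard : (rootsBelow p t).card = (rootsBelow p t').card) (hz : z ∈ Set.Icc t t') :
    p.eval z ≠ 0 := by
  intro hroot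
  have rootsBelow_eq : rootsBelow p t = rootsBelow p t' :=
    Finset.eq_of_subset_of_card_le
      (Finset.monotone_filter_right _ fun _ _ h => h.trans_le (hz.1.trans hz.2)) hcard.ge
  have hzt' : z ≠ t' := by
    rintro rfl
    exact ht' hroot
  have hp : p ≠ 0 := by
    rintro rfl
    simp at ht'
  have hmem : z ∈ rootsBelow p t' := by simp [rootsBelow, hp, hroot, hz.2.lt_of_ne hzt']
  rw [← rootsBelow_eq] at hmem
  exact hz.1.not_gt (Finset.mem_filter.1 hmem).2

variable {J : Type*} [Fintype J]

theorem eval_prod_ne_zero_of_forall_pos_smul {P : J → ℝ[X]} {w : J → ℤˣ} {t : ℝ}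
    (h : ∀ j, 0 < w j • (P j).eval t) : (∏ j, P j).eval t ≠ 0 := by
  rw [eval_prod]
  refine Finset.prod_ne_zero_iff.2 fun j _ hj => ?_
  simpa [hj] using h j

theorem sign_vector_eq_of_card_rootsBelow_eq {P : J → ℝ[X]} {w w' : J → ℤˣ} {t t' : ℝ}
    (h : ∀ j, 0 < w j • (P j).eval t) (h' : ∀ j, 0 < w' j • (P j).eval t')
    (hcard : (rootsBelow (∏ j, P j) t).card = (rootsBelow (∏ j, P j) t').card) : w = w' := by
  wlog htt' : t ≤ t' generalizing w w' t t'
  · exact (this h' h hcard.symm (le_of_not_ge htt')).symm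
  have eval_ne_zero (j : J) (z : ℝ) (hz : z ∈ Set.Icc t t') : (P j).eval z ≠ 0 := by
    have := eval_ne_zero_of_card_rootsBelow_eq (eval_prod_ne_zero_of_forall_pos_smul h') hcard hz
    rw [eval_prod] at this
    exact Finset.prod_ne_zero_iff.1 this j (Finset.mem_univ j)
  refine funext fun j => eq_of_pos_smul ?_ (h' j)
  exact pos_smul_of_isPreconnected isPreconnected_Icc (P j).continuous.continuousOn
    (eval_ne_zero j) (Set.left_mem_Icc.2 htt') (Set.right_mem_Icc.2 htt') (h j)

theorem ncard_sign_vectors_le (P : J → ℝ[X]) :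
    {w : J → ℤˣ | ∃ t, ∀ j, 0 < w j • (P j).eval t}.ncard ≤ (∏ j, P j).natDegree + 1 := by
  choose! t ht using fun (w : J → ℤˣ) (hw : ∃ t, ∀ j, 0 < w j • (P j).eval t) => hw
  refine (Set.ncard_le_ncard_of_injOn (t := Set.Iic (∏ j, P j).natDegree)
    (fun w => (rootsBelow (∏ j, P j) (t w)).card) (fun w _ => card_rootsBelow_le _ _)
    (fun w hw w' hw' h => sign_vector_eq_of_card_rootsBelow_eq (ht w hw) (ht w' hw') h)).trans ?_
  simp [Set.ncard_eq_toFinset_card']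

end UnivariateCells

section Crossing

open MvPolynomial

/-- A set `S` meeting at most `(d + 1) ^ k` sign cells of any finite family of polynomials whose
product has degree `d`. This is how a `k`-dimensional variety of bounded degree behaves, up to the
constant. -/
def MeetsFewSignCells {σ : Type*} (k : ℕ) (S : Set (σ → ℝ)) : Prop :=
  ∀ (s : ℕ) (q : Fin s → MvPolynomial σ ℝ),
    {w | (S ∩ signCell q w).Nonempty}.ncard ≤ ((∏ j, q j).totalDegree + 1) ^ k

variable {σ : Type*}

theorem meetsFewSignCells_singleton (x : σ → ℝ) : MeetsFewSignCells 0 {x} := by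
  intro s q
  rw [pow_zero, Set.ncard_le_one_iff]
  rintro w w' ⟨y, rfl, hw⟩ ⟨_, rfl, hw'⟩
  exact funext fun j => eq_of_pos_smul (hw j) (hw' j)

theorem meetsFewSignCells_line (a v : σ → ℝ) :
    MeetsFewSignCells 1 {x | ∃ t : ℝ, x = a + t • v} := by
  intro s q
  let line (i : σ) : Polynomial ℝ := .C (v i) * .X + .C (a i)
  have eval_line (t : ℝ) (p : MvPolynomial σ ℝ) : (aeval line p).eval t = eval (a + t • v) p := by
    have coord_eq : (fun i => Polynomial.aeval t (line i)) = a + t • v := by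
      funext i
      simp only [line, map_add, map_mul, Polynomial.aeval_C, Polynomial.aeval_X,
        Algebra.algebraMap_self_apply, Pi.add_apply, Pi.smul_apply, smul_eq_mul]
      ring
    rw [← Polynomial.coe_aeval_eq_eval, comp_aeval_apply, coord_eq, aeval_eq_eval]
  have natDegree_le (p : MvPolynomial σ ℝ) : (aeval line p).natDegree ≤ p.totalDegree := by
    simpa using aeval_natDegree_le p le_rfl line fun _ => Polynomial.natDegree_linear_le
  have eq_setOf : {w | ({x | ∃ t : ℝ, x = a + t • v} ∩ signCell q w).Nonempty} =
      {w | ∃ t, ∀ j, 0 < w j • (aeval line (q j)).eval t} := by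
    ext w
    simp only [eval_line]
    constructor
    · rintro ⟨_, ⟨t, rfl⟩, hw⟩
      exact ⟨t, hw⟩
    · rintro ⟨t, hw⟩
      exact ⟨_, ⟨t, rfl⟩, hw⟩
  rw [eq_setOf, pow_one]
  refine (ncard_sign_vectors_le fun j => aeval line (q j)).trans ?_
  rw [← map_prod]
  grw [natDegree_le]

end Crossing

section Partition

open MvPolynomial Finset

variable {I σ : Type*} {Γ : Finset I} {S : I → Set (σ → ℝ)} {k r : ℕ}

theorem exists_polynomials_forall_signCell_ncard_le [Fintype σ] [Nonempty σ]
    (hS : ∀ i ∈ Γ, MeetsFewSignCells k (S i)) (t : ℕ) :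
    ∃ q : Fin (Fintype.card σ * t) → MvPolynomial σ ℝ, (∀ j, q j ≠ 0) ∧
      (∏ j, q j).totalDegree ≤ 2 * Fintype.card σ ^ 2 * (2 ^ t - 1) ∧
      ∀ w, {i ∈ (Γ : Set I) | (S i ∩ signCell q w).Nonempty}.ncard * 2 ^ (Fintype.card σ * t) ≤
        #Γ * (2 * Fintype.card σ ^ 2 * (2 ^ t - 1) + 1) ^ k := by
  obtain ⟨mono, hinj, hle⟩ := exists_injOn_exponents
    (card_testBlock_eq_le_pow (σ := σ) (s := Fintype.card σ * t))
  have totalDegree_le (c : TestIndex (Fin (Fintype.card σ * t)) → ℝ) :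
      (∏ j, blockPolynomial testBlock mono c j).totalDegree ≤
        2 * Fintype.card σ ^ 2 * (2 ^ t - 1) :=
    calc (∏ j, blockPolynomial testBlock mono c j).totalDegree
        ≤ ∑ j, (blockPolynomial testBlock mono c j).totalDegree := totalDegree_finsetProd _ _
      _ ≤ ∑ j : Fin (Fintype.card σ * t),
            Fintype.card σ * 2 ^ ((j : ℕ) / Fintype.card σ + 1) := by
          gcongr with j
          exact totalDegree_blockPolynomial_le (fun i hi => hi ▸ hle i) c
      _ = 2 * Fintype.card σ ^ 2 * (2 ^ t - 1) := by
          rw [← mul_sum, sum_two_pow_div]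
          ring
  let B (i : I) : Set (TestIndex (Fin (Fintype.card σ * t)) → ℝ) :=
    {c | (S i ∩ signCell (blockPolynomial testBlock mono c) 1).Nonempty}
  have signFlip_mem_iff (i : I) (w c) : signFlip testBlock w c ∈ B i ↔
      (S i ∩ signCell (blockPolynomial testBlock mono c) w).Nonempty := by
    rw [signCell_blockPolynomial]
    rfl
  obtain ⟨c, hc, hcard⟩ := exists_forall_ncard_mul_two_pow_le (Γ := Γ) (B := B)
    (M := (2 * Fintype.card σ ^ 2 * (2 ^ t - 1) + 1) ^ k)
    (fun i _ => isOpen_nonempty_inter_signCell (S i) 1) fun i hi c => by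
      simp only [signFlip_mem_iff]
      exact (hS i hi _ _).trans (by grw [totalDegree_le])
  refine ⟨blockPolynomial testBlock mono c, fun j => blockPolynomial_ne_zero hc (hinj j),
    totalDegree_le c, fun w => ?_⟩
  simpa only [signFlip_mem_iff, Fintype.card_fin] using hcard w

theorem exists_connectedComponentIn_subset_signCell {J : Type*} [Fintype J]
    {q : J → MvPolynomial σ ℝ} {p : MvPolynomial σ ℝ} (hp : ∏ j, q j ∣ p) {x : σ → ℝ}
    (hx : eval x p ≠ 0) :
    ∃ w, connectedComponentIn {y | eval y p ≠ 0} x ⊆ signCell q w := by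
  have eval_ne_zero {y : σ → ℝ} (hy : eval y p ≠ 0) (j : J) : eval y (q j) ≠ 0 :=
    ne_zero_of_dvd_ne_zero hy (map_dvd (eval y) ((dvd_prod_of_mem q (mem_univ j)).trans hp))
  choose w hw using fun j => exists_pos_smul (eval_ne_zero hx j)
  exact ⟨w, fun y hy j => pos_smul_of_isPreconnected isPreconnected_connectedComponentIn
    (continuous_eval (q j)).continuousOn
    (fun z hz => eval_ne_zero (connectedComponentIn_subset _ _ hz) j)
    (mem_connectedComponentIn hx) hy (hw j)⟩

theorem mul_pow_le_of_mul_two_pow_le {n t D a G : ℕ} (hn : 0 < n) (hkr : k + r = n)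
    (hD : D ≤ 8 * n ^ 2 * 2 ^ t) (h : a * 2 ^ (n * t) ≤ G * (2 * n ^ 2 * (2 ^ t - 1) + 1) ^ k) :
    a * D ^ r ≤ (8 * n ^ 2) ^ n * G := by
  have le_mul_two_pow : 2 * n ^ 2 * (2 ^ t - 1) + 1 ≤ 8 * n ^ 2 * 2 ^ t := by
    have : 0 < n ^ 2 := by positivity
    have : n ^ 2 * (2 ^ t - 1) + n ^ 2 = n ^ 2 * 2 ^ t := by
      rw [← mul_add_one, Nat.sub_add_cancel Nat.one_le_two_pow]
    grind
  refine Nat.le_of_mul_le_mul_right ?_ (by positivity : 0 < 2 ^ (n * t))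
  calc a * D ^ r * 2 ^ (n * t)
      = a * 2 ^ (n * t) * D ^ r := by ring
    _ ≤ G * (8 * n ^ 2 * 2 ^ t) ^ k * (8 * n ^ 2 * 2 ^ t) ^ r := by
        grw [h, le_mul_two_pow, hD]
    _ = (8 * n ^ 2) ^ n * G * 2 ^ (n * t) := by
        rw [mul_assoc, ← pow_add, hkr, mul_pow, ← pow_mul, mul_comm t n]
        ring

theorem exists_polynomial_forall_component_ncard_le [Fintype σ] [Nonempty σ]
    (hkr : k + r = Fintype.card σ) (hS : ∀ i ∈ Γ, MeetsFewSignCells k (S i)) (D : ℕ) :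
    ∃ p₀ : MvPolynomial σ ℝ, p₀ ≠ 0 ∧ 2 * p₀.totalDegree ≤ D ∧
      ∀ p, p₀ ∣ p → ∀ x, eval x p ≠ 0 →
        {i ∈ (Γ : Set I) | (S i ∩ connectedComponentIn {y | eval y p ≠ 0} x).Nonempty}.ncard *
          D ^ r ≤ (8 * Fintype.card σ ^ 2) ^ Fintype.card σ * #Γ := by
  have card_pos : 0 < 4 * Fintype.card σ ^ 2 := by positivity
  let t := Nat.log 2 (D / (4 * Fintype.card σ ^ 2))
  have hlower : 4 * Fintype.card σ ^ 2 * (2 ^ t - 1) ≤ D :=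
    (Nat.mul_le_mul_left _ (Nat.sub_le_of_le_add (Nat.pow_log_le_add_one 2 _))).trans
      (Nat.mul_div_le D _)
  have hupper : D ≤ 8 * Fintype.card σ ^ 2 * 2 ^ t := by
    have := (Nat.div_lt_iff_lt_mul card_pos).1
      (Nat.lt_pow_succ_log_self one_lt_two (D / (4 * Fintype.card σ ^ 2)))
    exact this.le.trans_eq (by rw [pow_succ]; ring)
  obtain ⟨q, hq, hdeg, hcard⟩ := exists_polynomials_forall_signCell_ncard_le hS t
  refine ⟨∏ j, q j, prod_ne_zero_iff.2 fun j _ => hq j, by linarith, fun p hp x hx => ?_⟩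
  obtain ⟨w, hw⟩ := exists_connectedComponentIn_subset_signCell hp hx
  refine mul_pow_le_of_mul_two_pow_le Fintype.card_pos hkr hupper (le_trans ?_ (hcard w))
  gcongr with i
  exact Γ.finite_toSet.subset (Set.sep_subset _ _)

end Partition

end PolynomialPartitioning

open MvPolynomial PolynomialPartitioning in
theorem polynomial_partitioning_lines_and_points_general (d : ℕ) :
    ∃ C₁ C₂ : ℝ, 0 < C₁ ∧ 0 < C₂ ∧
      ∀ Γ₁ : Finset (Set (Fin (d + 1) → ℝ)),
        (∀ L ∈ Γ₁, ∃ a v : Fin (d + 1) → ℝ, L = {x | ∃ t : ℝ, x = a + t • v}) →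
        ∀ (Γ₂ : Finset (Fin (d + 1) → ℝ)) (D : ℕ), 1 ≤ D →
          ∃ p : MvPolynomial (Fin (d + 1)) ℝ, p ≠ 0 ∧ p.totalDegree ≤ D ∧
            ∀ x, eval x p ≠ 0 →
              ({L ∈ (Γ₁ : Set (Set (Fin (d + 1) → ℝ))) |
                  (L ∩ connectedComponentIn {y | eval y p ≠ 0} x).Nonempty}.ncard : ℝ) ≤
                  2 * C₁ * Γ₁.card / (D : ℝ) ^ d ∧
              (((Γ₂ : Set (Fin (d + 1) → ℝ)) ∩
                  connectedComponentIn {y | eval y p ≠ 0} x).ncard : ℝ) ≤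
                  2 * C₂ * Γ₂.card / (D : ℝ) ^ (d + 1) := by
  let C : ℕ := (8 * (d + 1) ^ 2) ^ (d + 1)
  have C_pos : 0 < (C : ℝ) / 2 := by positivity
  refine ⟨C / 2, C / 2, C_pos, C_pos, fun Γ₁ hΓ₁ Γ₂ D hD => ?_⟩
  obtain ⟨p₁, hp₁, hdeg₁, hcard₁⟩ := exists_polynomial_forall_component_ncard_le (k := 1) (r := d)
    (Γ := Γ₁) (S := id) (by simp [add_comm]) (fun L hL => by
      obtain ⟨a, v, rfl⟩ := hΓ₁ L hL
      exact meetsFewSignCells_line a v) D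
  obtain ⟨p₂, hp₂, hdeg₂, hcard₂⟩ := exists_polynomial_forall_component_ncard_le (k := 0)
    (r := d + 1) (Γ := Γ₂) (by simp) (fun x _ => meetsFewSignCells_singleton x) D
  refine ⟨p₁ * p₂, mul_ne_zero hp₁ hp₂, (totalDegree_mul p₁ p₂).trans (by lia), fun x hx => ?_⟩
  have D_pos : (0 : ℝ) < D := by exact_mod_cast hD
  rw [le_div_iff₀ (by positivity), le_div_iff₀ (by positivity), mul_div_cancel₀ _ two_ne_zero]
  specialize hcard₁ _ (dvd_mul_right p₁ p₂) x hx
  specialize hcard₂ _ (dvd_mul_left p₂ p₁) x hx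
  simp only [Set.singleton_inter_nonempty, Fintype.card_fin] at hcard₁ hcard₂
  exact ⟨mod_cast hcard₁, mod_cast hcard₂⟩

/-- **Polynomial partitioning for red lines and blue points in `ℝ³`**: there are constants
`C₁, C₂ > 0` such that for every finite collection `Γ₁` of lines in `ℝ³`, every finite set
`Γ₂` of points in `ℝ³`, and every `D ≥ 1`, there is a non-zero polynomial `p ∈ ℝ[x,y,z]` of
degree at most `D` such that every connected component of `ℝ³ \ Z(p)` meets at most
`2·C₁·|Γ₁|/D²` of the lines and at most `2·C₂·|Γ₂|/D³` of the points. -/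
theorem polynomial_partitioning_lines_and_points :
    ∃ C₁ C₂ : ℝ, 0 < C₁ ∧ 0 < C₂ ∧
      ∀ Γ₁ : Finset (Set (Fin 3 → ℝ)),
        (∀ L ∈ Γ₁, ∃ a v : Fin 3 → ℝ, v ≠ 0 ∧ L = {x : Fin 3 → ℝ | ∃ t : ℝ, x = a + t • v}) →
        ∀ (Γ₂ : Finset (Fin 3 → ℝ)) (D : ℕ), 1 ≤ D →
          ∃ p : MvPolynomial (Fin 3) ℝ, p ≠ 0 ∧ p.totalDegree ≤ D ∧
            ∀ x : Fin 3 → ℝ, MvPolynomial.eval x p ≠ 0 →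
              ({L ∈ (Γ₁ : Set (Set (Fin 3 → ℝ))) |
                  (L ∩ connectedComponentIn {y : Fin 3 → ℝ | MvPolynomial.eval y p ≠ 0} x).Nonempty}.ncard : ℝ) ≤
                  2 * C₁ * Γ₁.card / (D : ℝ) ^ 2 ∧
              (((Γ₂ : Set (Fin 3 → ℝ)) ∩
                  connectedComponentIn {y : Fin 3 → ℝ | MvPolynomial.eval y p ≠ 0} x).ncard : ℝ) ≤
                  2 * C₂ * Γ₂.card / (D : ℝ) ^ 3 := by
  obtain ⟨C₁, C₂, hC₁, hC₂, h⟩ := polynomial_partitioning_lines_and_points_general 2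
  exact ⟨C₁, C₂, hC₁, hC₂, fun Γ₁ hΓ₁ => h Γ₁ fun L hL =>
    (hΓ₁ L hL).imp fun a => Exists.imp fun v => And.right⟩
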